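/- arXiv:math/0608252 — 3 statements merged into one kernel-verified Lean document; each statement's English description precedes it below -/
import Mathlib

section
/- If p and q are strictly positive probability vectors on finite alphabets with H(p) > H(q), then there exists a finitary homomorphism from the Bernoulli scheme BS(p) to the Bernoulli scheme BS(q). -/
open MeasureTheory ENNReal Filter

noncomputable section

/-- The left shift transformation on bi-infinite sequences: `(shift x) n = x (n+1)`. -/
def shift {A : Type*} : (ℤ → A) → (ℤ → A) := fun x n => x (n + 1)

/-- `φ` is a homomorphism (factor map) from the shift system `(ℤ → A, μ, shift)` to
`(ℤ → B, ν, shift)`, defined on the shift-invariant full-measure domain `D`. -/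
structure IsFactorMap {A B : Type*} [MeasurableSpace A] [MeasurableSpace B]
    (μ : Measure (ℤ → A)) (ν : Measure (ℤ → B))
    (D : Set (ℤ → A)) (φ : (ℤ → A) → (ℤ → B)) : Prop where
  measurable_map : Measurable φ
  dom_measurable : MeasurableSet D
  dom_shift_invariant : shift ⁻¹' D = D
  dom_full : μ D = 1
  pushforward : ν = μ.map φ
  equivariant : ∀ x ∈ D, φ (shift x) = shift (φ x)

/-- The window `[-q, r]` of `x` determines the zero coordinate of the image under `φ`
(among points of the domain `D`). -/
def DeterminesAt {A B : Type*} (D : Set (ℤ → A)) (φ : (ℤ → A) → (ℤ → B))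
    (q r : ℕ) (x : ℤ → A) : Prop :=
  ∀ y ∈ D, (∀ i : ℤ, -(q : ℤ) ≤ i → i ≤ (r : ℤ) → y i = x i) → φ y 0 = φ x 0

/-- A homomorphism `φ` with domain `D` is finitary if for almost every `x` in the domain
there are nonnegative integers `q`, `r` such that the coordinates `x_{-q}, …, x_r`
determine `(φ x)_0`. -/
def IsFinitary {A B : Type*} [MeasurableSpace A] [MeasurableSpace B]
    (μ : Measure (ℤ → A)) (D : Set (ℤ → A)) (φ : (ℤ → A) → (ℤ → B)) : Prop :=
  ∀ᵐ x ∂μ, x ∈ D → ∃ q r : ℕ, DeterminesAt D φ q r x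

/-- The code length `C(x) = q(x) + r(x)` with `q(x), r(x)` minimal such that the window
`[-q(x), r(x)]` determines the zero output coordinate (`⊤` if no finite window works). -/
def codeLength {A B : Type*} (D : Set (ℤ → A)) (φ : (ℤ → A) → (ℤ → B))
    (x : ℤ → A) : ℝ≥0∞ :=
  ⨅ (q : ℕ) (r : ℕ) (_ : DeterminesAt D φ q r x), ((q : ℝ≥0∞) + (r : ℝ≥0∞))

/-- `μ` is the Bernoulli (product) measure on `(ℤ → A)` given by the probability vector `p`. -/
def IsBernoulliMeasure {A : Type*} [MeasurableSpace A] (μ : Measure (ℤ → A)) (p : A → ℝ) : Prop :=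
  ∀ (F : Finset ℤ) (s : ℤ → A),
    μ {x | ∀ i ∈ F, x i = s i} = ENNReal.ofReal (∏ i ∈ F, p (s i))

/-- A strictly positive probability vector on a finite alphabet. -/
def IsProbVector {A : Type*} [Fintype A] (p : A → ℝ) : Prop :=
  (∀ i, 0 < p i) ∧ ∑ i, p i = 1

/-- The entropy `H(p) = -∑ p_i log p_i` of a probability vector. -/
def vecEntropy {A : Type*} [Fintype A] (p : A → ℝ) : ℝ := -∑ i, p i * Real.log (p i)

/-- A finitary isomorphism: a pair of mutually inverse finitary factor maps. -/
def IsFinitaryIsomorphism {A B : Type*} [MeasurableSpace A] [MeasurableSpace B]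
    (μ : Measure (ℤ → A)) (ν : Measure (ℤ → B))
    (D : Set (ℤ → A)) (E : Set (ℤ → B))
    (φ : (ℤ → A) → (ℤ → B)) (ψ : (ℤ → B) → (ℤ → A)) : Prop :=
  IsFactorMap μ ν D φ ∧ IsFactorMap ν μ E ψ ∧
  IsFinitary μ D φ ∧ IsFinitary ν E ψ ∧
  (∀ x ∈ D, φ x ∈ E ∧ ψ (φ x) = x) ∧ (∀ y ∈ E, ψ y ∈ D ∧ φ (ψ y) = y)

namespace FinitaryCoding

open Finset

section MarkovChain

variable {A S : Type*} [Fintype A]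

/-- Expectation of `F` after `t` steps of the chain on `S` which moves from `σ` to `step σ a`
with weight `P a`. -/
def markovIter (P : A → ℝ≥0∞) (step : S → A → S) (F : S → ℝ≥0∞) : ℕ → S → ℝ≥0∞
  | 0, σ => F σ
  | t + 1, σ => ∑ a, P a * markovIter P step F t (step σ a)

variable {P : A → ℝ≥0∞} {step : S → A → S}

lemma markovIter_mono {F G : S → ℝ≥0∞} (h : ∀ σ, F σ ≤ G σ) (t : ℕ) (σ : S) :
    markovIter P step F t σ ≤ markovIter P step G t σ := by
  induction t generalizing σ with
  | zero => exact h σ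
  | succ t ih =>
    simp only [markovIter]
    gcongr
    exact ih _

lemma markovIter_succ (F : S → ℝ≥0∞) (t : ℕ) (σ : S) :
    markovIter P step F (t + 1) σ =
      markovIter P step (fun ρ => ∑ a, P a * F (step ρ a)) t σ := by
  induction t generalizing σ with
  | zero => simp [markovIter]
  | succ t ih =>
    rw [markovIter]
    simp_rw [ih]
    rfl

lemma markovIter_le_of_superharmonic {F : S → ℝ≥0∞}
    (h : ∀ σ, ∑ a, P a * F (step σ a) ≤ F σ) (t : ℕ) (σ : S) :
    markovIter P step F t σ ≤ F σ := by
  induction t generalizing σ with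
  | zero => exact le_rfl
  | succ t ih =>
    rw [markovIter]
    refine le_trans ?_ (h σ)
    gcongr
    exact ih _

lemma monotone_markovIter {F : S → ℝ≥0∞} (h : ∀ σ, F σ ≤ ∑ a, P a * F (step σ a)) (σ : S) :
    Monotone fun t => markovIter P step F t σ := by
  refine monotone_nat_of_le_succ fun t => ?_
  rw [markovIter_succ]
  exact markovIter_mono h t σ

lemma antitone_markovIter {F : S → ℝ≥0∞} (h : ∀ σ, ∑ a, P a * F (step σ a) ≤ F σ) (σ : S) :
    Antitone fun t => markovIter P step F t σ := by
  refine antitone_nat_of_succ_le fun t => ?_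
  rw [markovIter_succ]
  exact markovIter_mono h t σ

open Classical in
/-- The chain frozen as soon as it leaves `bad`. -/
def stoppedStep (step : S → A → S) (bad : S → Prop) (σ : S) (a : A) : S :=
  if bad σ then step σ a else σ

open Classical in
/-- A nonnegative function that decreases on average by `δ` at every bad state bounds the
expected time spent before leaving the bad states. -/
lemma mul_markovIter_stoppedStep_le (hP : ∑ a, P a = 1) (bad : S → Prop) (V : S → ℝ≥0∞)
    (δ : ℝ≥0∞) (hV : ∀ σ, bad σ → (∑ a, P a * V (step σ a)) + δ ≤ V σ) (n : ℕ) (σ : S) :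
    (n : ℝ≥0∞) * δ *
      markovIter P (stoppedStep step bad) (fun ρ => if bad ρ then 1 else 0) n σ ≤ V σ := by
  set F : S → ℝ≥0∞ := fun ρ => if bad ρ then 1 else 0 with hF
  have hzero : ∀ t σ, ¬ bad σ → markovIter P (stoppedStep step bad) F t σ = 0 := by
    intro t
    induction t with
    | zero => intro σ h; simp [markovIter, hF, h]
    | succ t ih => intro σ h; simp [markovIter, stoppedStep, h, ih σ h]
  have hsum : ∀ T σ, δ * ∑ t ∈ range T, markovIter P (stoppedStep step bad) F t σ ≤ V σ := by
    intro T
    induction T with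
    | zero => simp
    | succ T ih =>
      intro σ
      by_cases h : bad σ
      · have h1 : ∑ t ∈ range (T + 1), markovIter P (stoppedStep step bad) F t σ
            = (∑ a, P a * ∑ t ∈ range T, markovIter P (stoppedStep step bad) F t (step σ a))
              + 1 := by
          rw [Finset.sum_range_succ']
          simp only [markovIter, stoppedStep, h, if_true, hF, Finset.mul_sum]
          rw [Finset.sum_comm]
        rw [h1, mul_add, mul_one, Finset.mul_sum]
        refine le_trans ?_ (hV σ h)
        refine add_le_add (Finset.sum_le_sum fun a _ => ?_) le_rfl
        rw [mul_left_comm]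
        gcongr
        exact ih _
      · rw [Finset.sum_eq_zero fun t _ => hzero t σ h]
        simp
  have hanti : Antitone fun t => markovIter P (stoppedStep step bad) F t σ := by
    refine antitone_markovIter (fun σ => ?_) σ
    by_cases h : bad σ
    · calc ∑ a, P a * F (stoppedStep step bad σ a) ≤ ∑ a, P a * 1 := by
            gcongr with a
            simp only [hF]
            split_ifs <;> simp
        _ = F σ := by simp [hP, hF, h]
    · simp [hF, stoppedStep, h]
  refine le_trans ?_ (hsum n σ)
  rw [mul_right_comm, mul_comm δ]
  gcongr
  calc (n : ℝ≥0∞) * markovIter P (stoppedStep step bad) F n σ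
      = ∑ t ∈ range n, markovIter P (stoppedStep step bad) F n σ := by simp
    _ ≤ _ := Finset.sum_le_sum fun t ht => hanti (Finset.mem_range.1 ht).le

end MarkovChain

section Segment

variable {A S : Type*}

/-- The word `x u, …, x (u + n - 1)`. -/
def seg (x : ℤ → A) : ℤ → ℕ → List A
  | _, 0 => []
  | u, n + 1 => x u :: seg x (u + 1) n

lemma length_seg (x : ℤ → A) (u : ℤ) (n : ℕ) : (seg x u n).length = n := by
  induction n generalizing u with
  | zero => rfl
  | succ n ih => simp [seg, ih]

lemma seg_add (x : ℤ → A) (u : ℤ) (m n : ℕ) :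
    seg x u (m + n) = seg x u m ++ seg x (u + m) n := by
  induction m generalizing u with
  | zero => simp [seg]
  | succ m ih =>
    rw [show m + 1 + n = (m + n) + 1 by ring, seg, seg, ih]
    rw [List.cons_append, Nat.cast_succ, add_assoc, add_comm (1 : ℤ)]

lemma seg_congr {x y : ℤ → A} {u : ℤ} {n : ℕ}
    (h : ∀ i, u ≤ i → i < u + n → y i = x i) : seg y u n = seg x u n := by
  induction n generalizing u with
  | zero => rfl
  | succ n ih =>
    rw [seg, seg, h u le_rfl (by push_cast; omega),
      ih fun i h1 h2 => h i (by omega) (by push_cast; omega)]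

lemma seg_shift (x : ℤ → A) (u : ℤ) (n : ℕ) : seg (shift x) u n = seg x (u + 1) n := by
  induction n generalizing u with
  | zero => rfl
  | succ n ih => rw [seg, seg, ih]; rfl

lemma seg_eq_replicate {x : ℤ → A} {a : A} {u : ℤ} {n : ℕ}
    (h : ∀ i, u ≤ i → i < u + n → x i = a) : seg x u n = List.replicate n a := by
  induction n generalizing u with
  | zero => rfl
  | succ n ih =>
    rw [seg, List.replicate_succ, h u le_rfl (by push_cast; omega),
      ih fun i h1 h2 => h i (by omega) (by push_cast; omega)]

lemma foldl_stoppedStep_eq (step : S → A → S) (bad : S → Prop) (x : ℤ → A) (u : ℤ) (n : ℕ)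
    (σ : S) (h : ∀ t < n, bad ((seg x u t).foldl step σ)) :
    (seg x u n).foldl (stoppedStep step bad) σ = (seg x u n).foldl step σ := by
  induction n with
  | zero => rfl
  | succ n ih =>
    rw [seg_add, List.foldl_append, List.foldl_append, ih fun t ht => h t (by omega)]
    simp [seg, stoppedStep, h n (by omega)]

variable [MeasurableSpace A] {p : A → ℝ} {μ : Measure (ℤ → A)}

lemma isProbabilityMeasure_of_bernoulli [Nonempty A] (hμ : IsBernoulliMeasure μ p) :
    IsProbabilityMeasure μ := by
  refine ⟨?_⟩
  simpa using hμ ∅ fun _ => Classical.arbitrary A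

variable [DiscreteMeasurableSpace A]

lemma measurableSet_seg [Countable A] (Q : List A → Prop) (u : ℤ) (n : ℕ) :
    MeasurableSet {x : ℤ → A | Q (seg x u n)} := by
  induction n generalizing u Q with
  | zero => simp [seg]
  | succ n ih =>
    have : {x : ℤ → A | Q (seg x u (n + 1))} =
        ⋃ b : A, {x | x u = b} ∩ {x | Q (b :: seg x (u + 1) n)} := by
      ext x; simp [seg]
    rw [this]
    refine MeasurableSet.iUnion fun b => MeasurableSet.inter ?_ (ih (fun l => Q (b :: l)) _)
    have hb : MeasurableSet ((fun x : ℤ → A => x u) ⁻¹' {b}) :=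
      measurable_pi_apply u MeasurableSet.of_discrete
    have h : {x : ℤ → A | x u = b} = (fun x : ℤ → A => x u) ⁻¹' {b} := by ext x; simp
    rwa [h]

variable [Fintype A]

open Classical in
lemma measure_cylinder_inter_foldl (hp : ∀ a, 0 ≤ p a) (hμ : IsBernoulliMeasure μ p)
    (step : S → A → S) (G : S → Prop) (n : ℕ) (F : Finset ℤ) (z : ℤ → A) (u : ℤ) (σ : S)
    (hF : ∀ i ∈ F, i < u) :
    μ ({x | ∀ i ∈ F, x i = z i} ∩ {x | G ((seg x u n).foldl step σ)}) =
      ENNReal.ofReal (∏ i ∈ F, p (z i)) *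
        markovIter (fun a => ENNReal.ofReal (p a)) step (fun ρ => if G ρ then 1 else 0) n σ := by
  induction n generalizing F z u σ with
  | zero =>
    by_cases h : G σ <;> simp [seg, markovIter, h]
    exact hμ F z
  | succ n ih =>
    have hu : u ∉ F := fun h => lt_irrefl _ (hF u h)
    have hset : ({x | ∀ i ∈ F, x i = z i} ∩ {x : ℤ → A | G ((seg x u (n + 1)).foldl step σ)}) =
        ⋃ b : A, ({x | ∀ i ∈ insert u F, x i = Function.update z u b i} ∩
          {x | G ((seg x (u + 1) n).foldl step (step σ b))}) := by
      ext x
      simp only [Set.mem_inter_iff, Set.mem_ofPred_eq, Set.mem_iUnion, Finset.forall_mem_insert,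
        Function.update_self, seg, List.foldl_cons]
      constructor
      · rintro ⟨h1, h2⟩
        refine ⟨x u, ⟨rfl, fun i hi => ?_⟩, h2⟩
        rw [Function.update_of_ne (by rintro rfl; exact hu hi), h1 i hi]
      · rintro ⟨b, ⟨h1, h2⟩, h3⟩
        subst h1
        refine ⟨fun i hi => ?_, h3⟩
        have := h2 i hi
        rwa [Function.update_of_ne (by rintro rfl; exact hu hi)] at this
    rw [hset, measure_iUnion, tsum_fintype, markovIter, Finset.mul_sum]
    · refine Finset.sum_congr rfl fun b _ => ?_
      rw [ih (insert u F) (Function.update z u b) (u + 1) (step σ b) (by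
        intro i hi
        rcases Finset.mem_insert.1 hi with rfl | hi
        · omega
        · have := hF i hi; omega), Finset.prod_insert hu, ENNReal.ofReal_mul (hp _)]
      have : ∏ i ∈ F, p (Function.update z u b i) = ∏ i ∈ F, p (z i) :=
        Finset.prod_congr rfl fun i hi => by
          rw [Function.update_of_ne (by rintro rfl; exact hu hi)]
      rw [this, Function.update_self]
      ring
    · intro b c hbc
      refine Set.disjoint_left.2 fun x hx hy => hbc ?_
      have h1 := hx.1 u (Finset.mem_insert_self _ _)
      have h2 := hy.1 u (Finset.mem_insert_self _ _)
      simp only [Function.update_self] at h1 h2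
      rw [← h1, h2]
    · intro b
      refine MeasurableSet.inter ?_
        (measurableSet_seg (fun l => G (l.foldl step (step σ b))) _ _)
      have : {x : ℤ → A | ∀ i ∈ insert u F, x i = Function.update z u b i} =
          ⋂ i ∈ insert u F, (fun x : ℤ → A => x i) ⁻¹' {Function.update z u b i} := by
        ext x; simp
      rw [this]
      exact Finset.measurableSet_biInter _ fun i _ =>
        measurable_pi_apply i (MeasurableSet.of_discrete)

open Classical in
lemma measure_foldl_seg [Nonempty A] (hp : ∀ a, 0 ≤ p a) (hμ : IsBernoulliMeasure μ p)
    (step : S → A → S) (G : S → Prop) (u : ℤ) (n : ℕ) (σ : S) :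
    μ {x | G ((seg x u n).foldl step σ)} =
      markovIter (fun a => ENNReal.ofReal (p a)) step (fun ρ => if G ρ then 1 else 0) n σ := by
  have := measure_cylinder_inter_foldl hp hμ step G n ∅ (fun _ => Classical.arbitrary A) u σ
    (by simp)
  simpa using this

lemma mul_measure_forall_bad_le [Nonempty A] (hp : IsProbVector p) (hμ : IsBernoulliMeasure μ p)
    (step : S → A → S) (bad : S → Prop) (V : S → ℝ≥0∞) (δ : ℝ≥0∞)
    (hV : ∀ σ, bad σ → (∑ a, ENNReal.ofReal (p a) * V (step σ a)) + δ ≤ V σ)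
    (u : ℤ) (n : ℕ) (σ : S) :
    (n : ℝ≥0∞) * δ * μ {x | ∀ t ≤ n, bad ((seg x u t).foldl step σ)} ≤ V σ := by
  classical
  have hP : ∑ a, ENNReal.ofReal (p a) = 1 := by
    rw [← ENNReal.ofReal_sum_of_nonneg fun a _ => (hp.1 a).le, hp.2, ENNReal.ofReal_one]
  refine le_trans ?_ (mul_markovIter_stoppedStep_le hP bad V δ hV n σ)
  rw [← measure_foldl_seg (fun a => (hp.1 a).le) hμ (stoppedStep step bad) bad u n σ]
  refine mul_le_mul_right (measure_mono fun x hx => ?_) _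
  have : bad ((seg x u n).foldl (stoppedStep step bad) σ) := by
    rw [foldl_stoppedStep_eq step bad x u n σ fun t ht => hx t ht.le]
    exact hx n le_rfl
  exact this

lemma tendsto_zero_of_mul_le {f : ℕ → ℝ≥0∞} {δ K : ℝ≥0∞} (hδ : δ ≠ 0) (hK : K ≠ ∞)
    (h : ∀ n : ℕ, (n : ℝ≥0∞) * δ * f n ≤ K) : Tendsto f atTop (nhds 0) := by
  have h1 : Tendsto (fun n : ℕ => (n : ℝ≥0∞) * δ) atTop (nhds (∞ * δ)) :=
    ENNReal.Tendsto.mul_const ENNReal.tendsto_nat_nhds_top (Or.inl ENNReal.top_ne_zero)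
  rw [ENNReal.top_mul hδ] at h1
  have h2 := ENNReal.Tendsto.const_div h1 (Or.inr hK)
  rw [ENNReal.div_top] at h2
  refine tendsto_of_tendsto_of_tendsto_of_le_of_le' tendsto_const_nhds h2
    (Eventually.of_forall fun _ => bot_le) ?_
  filter_upwards [eventually_ne_atTop 0] with n hn
  rw [ENNReal.le_div_iff_mul_le (Or.inl (mul_ne_zero (by exact_mod_cast hn) hδ)) (Or.inr hK),
    mul_comm]
  exact h n

lemma ae_exists_not_bad [Nonempty A] (hp : IsProbVector p) (hμ : IsBernoulliMeasure μ p)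
    (step : S → A → S) (bad : S → Prop) (V : S → ℝ≥0∞) {δ : ℝ≥0∞} (hδ : δ ≠ 0)
    (hV : ∀ σ, bad σ → (∑ a, ENNReal.ofReal (p a) * V (step σ a)) + δ ≤ V σ)
    (σ : S) (hfin : ∀ l : List A, V (l.foldl step σ) ≠ ∞) (u : ℤ) (T : ℕ) :
    ∀ᵐ x ∂μ, ∃ t ≥ T, ¬ bad ((seg x u t).foldl step σ) := by
  have key : ∀ l : List A, μ {x | ∀ t, bad ((seg x (u + T) t).foldl step (l.foldl step σ))} = 0 := by
    intro l
    have := tendsto_zero_of_mul_le hδ (hfin l)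
      (fun n => mul_measure_forall_bad_le hp hμ step bad V δ hV (u + T) n (l.foldl step σ))
    refine le_antisymm (ge_of_tendsto' this fun n => measure_mono fun x hx t _ => hx t) bot_le
  have key2 := measure_iUnion_null key
  refine measure_mono_null (fun x hx => ?_) key2
  simp only [Set.mem_compl_iff, Set.mem_ofPred_eq, not_exists, not_and, not_not] at hx
  refine Set.mem_iUnion.2 ⟨seg x u T, fun t => ?_⟩
  rw [← List.foldl_append, ← seg_add]
  exact hx (T + t) (by omega)

end Segment

section Greedy

open Classical in
/-- The total weight of the items of `S` that `f` assigns to `g`. -/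
def load {I G : Type*} (S : Finset I) (wt : I → ℝ≥0∞) (f : I → Option G) (g : G) : ℝ≥0∞ :=
  ∑ i ∈ S, if f i = some g then wt i else 0

variable {I G : Type*} {S : Finset I} {wt : I → ℝ≥0∞} {π : G → ℝ≥0∞}

/-- Items are put greedily into bins of capacities `π`: every rejected item fits in no bin. -/
lemma exists_greedy_assignment (f₀ : I → Option G) (h₀ : ∀ g, load S wt f₀ g ≤ π g) :
    ∃ f : I → Option G, (∀ i g, f₀ i = some g → f i = some g) ∧ (∀ g, load S wt f g ≤ π g) ∧
      ∀ i ∈ S, f i = none → ∀ g, π g < load S wt f g + wt i := by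
  classical
  suffices H : ∀ S' ⊆ S, ∃ f : I → Option G, (∀ i g, f₀ i = some g → f i = some g) ∧
      (∀ g, load S wt f g ≤ π g) ∧
      ∀ i ∈ S', f i = none → ∀ g, π g < load S wt f g + wt i from H S subset_rfl
  intro S'
  induction S' using Finset.induction_on with
  | empty => exact fun _ => ⟨f₀, fun _ _ h => h, h₀, by simp⟩
  | insert i S' hi ih =>
    intro hS
    obtain ⟨f, hf1, hf2, hf3⟩ := ih fun j hj => hS (Finset.mem_insert_of_mem hj)
    by_cases hfi : f i = none ∧ ∃ g, load S wt f g + wt i ≤ π g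
    · obtain ⟨hnone, g, hg⟩ := hfi
      have hload : ∀ g', load S wt (Function.update f i (some g)) g' =
          load S wt f g' + if g' = g then wt i else 0 := by
        intro g'
        have hiS : i ∈ S := hS (Finset.mem_insert_self _ _)
        unfold load
        rw [← Finset.add_sum_erase _ _ hiS, ← Finset.add_sum_erase (a := i) S _ hiS]
        have : ∑ j ∈ S.erase i, (if Function.update f i (some g) j = some g' then wt j else 0) =
            ∑ j ∈ S.erase i, (if f j = some g' then wt j else 0) :=
          Finset.sum_congr rfl fun j hj => by
            rw [Function.update_of_ne (Finset.ne_of_mem_erase hj)]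
        rw [this, Function.update_self, hnone]
        simp [add_comm, eq_comm]
      refine ⟨Function.update f i (some g), ?_, ?_, ?_⟩
      · intro j g' h
        have := hf1 j g' h
        rwa [Function.update_of_ne]
        rintro rfl
        simp [hnone] at this
      · intro g'
        rw [hload]
        split_ifs with h
        · rwa [h]
        · simpa using hf2 g'
      · intro j hj hjn g'
        have hji : j ≠ i := by
          rintro rfl
          simp at hjn
        rw [Function.update_of_ne hji] at hjn
        refine (hf3 j (Finset.mem_of_mem_insert_of_ne hj hji) hjn g').trans_le ?_
        rw [hload]
        gcongr
        exact le_self_add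
    · push Not at hfi
      refine ⟨f, hf1, hf2, fun j hj hjn g => ?_⟩
      rcases Finset.mem_insert.1 hj with rfl | hj
      · exact hfi hjn g
      · exact hf3 j hj hjn g

lemma sum_load_add_sum_none [Fintype G] (f : I → Option G) (F : G → ℝ≥0∞) (c : ℝ≥0∞) :
    ∑ i ∈ S, wt i * (f i).elim c F =
      (∑ g, load S wt f g * F g) + c * ∑ i ∈ S, wt i * (f i).elim 1 (fun _ => 0) := by
  classical
  unfold load
  simp_rw [Finset.sum_mul, Finset.mul_sum]
  rw [Finset.sum_comm, ← Finset.sum_add_distrib]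
  refine Finset.sum_congr rfl fun i _ => ?_
  cases h : f i with
  | none => simp [mul_comm]
  | some g => simp

lemma min_le_rpow_mul_rpow {x y : ℝ≥0∞} (hx : x ≠ ∞) {s : ℝ} (hs0 : 0 < s) (hs1 : s < 1) :
    min x y ≤ y ^ s * x ^ (1 - s) := by
  have hsplit : ∀ z : ℝ≥0∞, z ≠ ∞ → z = z ^ s * z ^ (1 - s) := by
    intro z hz
    rcases eq_or_ne z 0 with rfl | h0
    · rw [ENNReal.zero_rpow_of_pos hs0, zero_mul]
    · rw [← ENNReal.rpow_add _ _ h0 hz]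
      simp
  have hm : min x y ≠ ∞ := ne_top_of_le_ne_top hx (min_le_left _ _)
  rw [hsplit _ hm]
  exact mul_le_mul' (ENNReal.rpow_le_rpow (min_le_right _ _) hs0.le)
    (ENNReal.rpow_le_rpow (min_le_left _ _) (by linarith))

/-- The weight rejected by a greedy assignment is controlled by the power sums of the weights
and of the capacities. -/
lemma sq_sum_none_le [Fintype G] (f : I → Option G) (hS : ∑ i ∈ S, wt i = 1)
    (hπ : ∑ g, π g = 1) (hwt : ∀ i ∈ S, wt i ≠ 0)
    (hmax : ∀ i ∈ S, f i = none → ∀ g, π g < load S wt f g + wt i)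
    {s : ℝ} (hs0 : 0 < s) (hs1 : s < 1) :
    (∑ i ∈ S, wt i * (f i).elim 1 (fun _ => 0)) ^ 2 ≤
      (∑ i ∈ S, wt i ^ (1 + s)) * ∑ g, π g ^ (1 - s) := by
  classical
  set U := ∑ i ∈ S, wt i * (f i).elim 1 (fun _ => 0) with hU
  by_cases hne : (S.filter fun i => f i = none).Nonempty
  · obtain ⟨m, hm, hmin⟩ := Finset.exists_min_image _ wt hne
    rw [Finset.mem_filter] at hm
    have hπ1 : ∀ g, π g ≠ ∞ := fun g => by
      refine ne_top_of_le_ne_top ENNReal.one_ne_top ?_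
      rw [← hπ]
      exact Finset.single_le_sum (fun _ _ => bot_le) (Finset.mem_univ g)
    have hwt1 : ∀ i ∈ S, wt i ≠ ∞ := fun i hi => by
      refine ne_top_of_le_ne_top ENNReal.one_ne_top ?_
      rw [← hS]
      exact Finset.single_le_sum (fun _ _ => bot_le) hi
    have hbal : (∑ g, load S wt f g) + U = 1 := by
      have := sum_load_add_sum_none (S := S) (wt := wt) f (fun _ => 1) 1
      simp only [mul_one, one_mul] at this
      refine this.symm.trans (Eq.trans ?_ hS)
      refine Finset.sum_congr rfl fun i _ => ?_
      cases f i <;> simp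
    have h1 : U ≤ wt m ^ s * ∑ g, π g ^ (1 - s) := by
      have hle : (∑ g, load S wt f g) + U ≤
          (∑ g, load S wt f g) + wt m ^ s * ∑ g, π g ^ (1 - s) := by
        rw [hbal, ← hπ, Finset.mul_sum, ← Finset.sum_add_distrib]
        refine Finset.sum_le_sum fun g _ => ?_
        calc π g ≤ load S wt f g + min (π g) (wt m) := by
              rcases min_choice (π g) (wt m) with h | h <;> rw [h]
              · exact le_add_self
              · exact (hmax m hm.1 hm.2 g).le
          _ ≤ _ := by
              gcongr
              exact min_le_rpow_mul_rpow (hπ1 g) hs0 hs1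
      refine (ENNReal.add_le_add_iff_left ?_).1 hle
      refine ne_top_of_le_ne_top ENNReal.one_ne_top ?_
      rw [← hbal]
      exact le_self_add
    have h2 : wt m ^ s * U ≤ ∑ i ∈ S, wt i ^ (1 + s) := by
      rw [hU, Finset.mul_sum]
      refine Finset.sum_le_sum fun i hi => ?_
      cases h : f i with
      | none =>
        have : wt m ≤ wt i := hmin i (Finset.mem_filter.2 ⟨hi, h⟩)
        rw [add_comm, ENNReal.rpow_add _ _ (hwt i hi) (hwt1 i hi), ENNReal.rpow_one]
        simp only [Option.elim_none, mul_one]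
        gcongr
      | some g => simp
    have hm0 : wt m ^ s ≠ 0 := by
      simp [ENNReal.rpow_eq_zero_iff, hwt m hm.1, hwt1 m hm.1]
    have hmt : wt m ^ s ≠ ∞ := ENNReal.rpow_ne_top_of_nonneg hs0.le (hwt1 m hm.1)
    refine (ENNReal.mul_le_mul_iff_right hm0 hmt).1 ?_
    calc wt m ^ s * U ^ 2 = (wt m ^ s * U) * U := by ring
      _ ≤ (∑ i ∈ S, wt i ^ (1 + s)) * (wt m ^ s * ∑ g, π g ^ (1 - s)) := mul_le_mul' h2 h1
      _ = _ := by ring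
  · rw [Finset.not_nonempty_iff_eq_empty, Finset.filter_eq_empty_iff] at hne
    have : U = 0 := by
      refine Finset.sum_eq_zero fun i hi => ?_
      cases h : f i with
      | none => exact absurd h (hne hi)
      | some g => simp
    simp [this]

end Greedy

section Words

variable {A : Type*}

/-- The weight of a word with independent letters. -/
def wordWeight (P : A → ℝ≥0∞) (w : List A) : ℝ≥0∞ := (w.map P).prod

lemma wordWeight_ne_zero {P : A → ℝ≥0∞} (hP : ∀ a, P a ≠ 0) (w : List A) :
    wordWeight P w ≠ 0 := by
  induction w with
  | nil => simp [wordWeight]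
  | cons a w ih =>
    rw [wordWeight, List.map_cons, List.prod_cons]
    exact mul_ne_zero (hP a) ih

variable [Fintype A]

/-- The words of length `t`. -/
def words (A : Type*) [Fintype A] : ℕ → Finset (List A)
  | 0 => {[]}
  | t + 1 => (univ ×ˢ words A t).map
      ⟨fun y : A × List A => y.1 :: y.2, fun y z h => by
        simp only [List.cons.injEq] at h; exact Prod.ext h.1 h.2⟩

lemma sum_words_succ {M : Type*} [AddCommMonoid M] (t : ℕ) (F : List A → M) :
    ∑ w ∈ words A (t + 1), F w = ∑ w ∈ words A t, ∑ a, F (a :: w) := by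
  rw [words, Finset.sum_map, Finset.sum_product_right]
  rfl

lemma length_of_mem_words {t : ℕ} {w : List A} (h : w ∈ words A t) : w.length = t := by
  induction t generalizing w with
  | zero => simp_all [words]
  | succ t ih =>
    simp only [words, Finset.mem_map, Finset.mem_product, Finset.mem_univ, true_and,
      Prod.exists] at h
    obtain ⟨a, v, hv, rfl⟩ := h
    exact congrArg (· + 1) (ih hv)

lemma markovIter_cons_nil (P : A → ℝ≥0∞) (F : List A → ℝ≥0∞) (t : ℕ) :
    markovIter P (fun w a => a :: w) F t [] = ∑ w ∈ words A t, wordWeight P w * F w := by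
  induction t generalizing F with
  | zero => simp [markovIter, words, wordWeight]
  | succ t ih =>
    rw [markovIter_succ, ih, sum_words_succ]
    refine Finset.sum_congr rfl fun w _ => ?_
    rw [Finset.mul_sum]
    refine Finset.sum_congr rfl fun a _ => ?_
    simp only [wordWeight, List.map_cons, List.prod_cons]
    ring

lemma sum_wordWeight_rpow (P : A → ℝ≥0∞) {s : ℝ} (hs : 0 ≤ s) (t : ℕ) :
    ∑ w ∈ words A t, wordWeight P w ^ s = (∑ a, P a ^ s) ^ t := by
  induction t with
  | zero => simp [words, wordWeight]
  | succ t ih =>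
    rw [sum_words_succ, pow_succ, ← ih, Finset.sum_mul]
    refine Finset.sum_congr rfl fun w _ => ?_
    rw [Finset.mul_sum]
    refine Finset.sum_congr rfl fun a _ => ?_
    simp only [wordWeight, List.map_cons, List.prod_cons]
    rw [ENNReal.mul_rpow_of_nonneg _ _ hs, mul_comm]

lemma sum_wordWeight {P : A → ℝ≥0∞} (hP : ∑ a, P a = 1) (t : ℕ) :
    ∑ w ∈ words A t, wordWeight P w = 1 := by
  simpa [hP] using sum_wordWeight_rpow P zero_le_one t

/-- A target law `π` is produced from a stream of letters by a decoder, reading words with the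
latest letter first, that is greedy at every word length. -/
lemma exists_greedy_decoder {G : Type*} {P : A → ℝ≥0∞} (hP : ∑ a, P a = 1) (π : G → ℝ≥0∞) :
    ∃ f : List A → Option G, (∀ a w g, f w = some g → f (a :: w) = some g) ∧
      ∀ t, (∀ g, load (words A t) (wordWeight P) f g ≤ π g) ∧
        ∀ w ∈ words A t, f w = none → ∀ g,
          π g < load (words A t) (wordWeight P) f g + wordWeight P w := by
  classical
  let C : ℕ → (List A → Option G) → Prop := fun t f =>
    (∀ g, load (words A t) (wordWeight P) f g ≤ π g) ∧
      ∀ w ∈ words A t, f w = none → ∀ g,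
        π g < load (words A t) (wordWeight P) f g + wordWeight P w
  have hnext : ∀ t (f : {f // C t f}), ∃ f' : {f // C (t + 1) f},
      ∀ a w g, f.1 w = some g → f'.1 (a :: w) = some g := by
    rintro t ⟨f, hf1, hf2⟩
    obtain ⟨f', h1, h2, h3⟩ := exists_greedy_assignment (S := words A (t + 1))
      (wt := wordWeight P) (π := π) (fun w => f w.tail) (fun g => by
        refine le_trans (le_of_eq ?_) (hf1 g)
        rw [load, sum_words_succ, load]
        refine Finset.sum_congr rfl fun w _ => ?_
        simp only [List.tail_cons, wordWeight, List.map_cons, List.prod_cons]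
        split_ifs
        · rw [← Finset.sum_mul, hP, one_mul]
        · simp)
    exact ⟨⟨f', h2, h3⟩, fun a w g h => h1 (a :: w) g h⟩
  choose next hnext using hnext
  obtain ⟨f₀, -, h2, h3⟩ := exists_greedy_assignment (S := words A 0)
      (wt := wordWeight P) (π := π) (fun _ => none) (fun g => by simp [load])
  let F : ∀ t, {f // C t f} := fun t => Nat.rec ⟨f₀, h2, h3⟩ (fun t f => next t f) t
  have hlen : ∀ t, ∀ w ∈ words A t, (F w.length).1 w = (F t).1 w := by
    intro t w hw
    obtain rfl := length_of_mem_words hw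
    rfl
  have hload : ∀ t g, load (words A t) (wordWeight P) (fun w => (F w.length).1 w) g =
      load (words A t) (wordWeight P) (F t).1 g := by
    intro t g
    refine Finset.sum_congr rfl fun w hw => ?_
    simp only [hlen t w hw]
  refine ⟨fun w => (F w.length).1 w, fun a w g h => hnext _ _ a w g h, fun t => ⟨fun g => ?_, ?_⟩⟩
  · rw [hload]
    exact (F t).2.1 g
  · intro w hw hn g
    rw [hload]
    refine (F t).2.2 w hw ?_ g
    exact (hlen t w hw).symm.trans hn

end Words

section Entropy

variable {A B : Type*} [Fintype A] [Fintype B] {p : A → ℝ} {q : B → ℝ}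

lemma hasDerivAt_sum_rpow (hp : IsProbVector p) (c : ℝ) :
    HasDerivAt (fun s : ℝ => ∑ a, p a ^ (1 + c * s)) (-c * vecEntropy p) 0 := by
  have h : ∀ a ∈ univ, HasDerivAt (fun s : ℝ => p a ^ (1 + c * s))
      (Real.log (p a) * c * p a ^ (1 + c * (0 : ℝ))) 0 := by
    intro a _
    refine HasDerivAt.const_rpow (hp.1 a) ?_
    simpa using ((hasDerivAt_id (0 : ℝ)).const_mul c).const_add 1
  refine (HasDerivAt.fun_sum h).congr_deriv ?_
  simp only [mul_zero, add_zero, Real.rpow_one, vecEntropy]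
  rw [neg_mul_neg, Finset.mul_sum]
  exact Finset.sum_congr rfl fun a _ => by ring

/-- The entropy inequality in terms of power sums. -/
lemma exists_exponent (hp : IsProbVector p) (hq : IsProbVector q)
    (hH : vecEntropy q < vecEntropy p) :
    ∃ s : ℝ, 0 < s ∧ s < 1 ∧ (∑ a, p a ^ (1 + s)) * (∑ b, q b ^ (1 - s)) < 1 := by
  have h1 := (hasDerivAt_sum_rpow hp 1).mul (hasDerivAt_sum_rpow hq (-1))
  have h0 : ((fun s : ℝ => ∑ a, p a ^ (1 + 1 * s)) * fun s : ℝ => ∑ b, q b ^ (1 + -1 * s)) 0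
      = 1 := by
    simp [hp.2, hq.2]
  have hneg : -1 * vecEntropy p * (fun s : ℝ => ∑ b, q b ^ (1 + -1 * s)) 0 +
      (fun s : ℝ => ∑ a, p a ^ (1 + 1 * s)) 0 * (- -1 * vecEntropy q) < 0 := by
    simp [hp.2, hq.2]
    linarith
  have hev := h1.tendsto_slope.eventually_lt_const hneg
  have hev' := hev.filter_mono (nhdsWithin_mono (0 : ℝ) (s := Set.Ioi 0) fun s hs =>
    ne_of_gt (Set.mem_Ioi.1 hs))
  have hlt : ∀ᶠ s in nhdsWithin (0 : ℝ) (Set.Ioi 0), s < 1 :=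
    (eventually_lt_nhds one_pos).filter_mono nhdsWithin_le_nhds
  obtain ⟨s, ⟨hs, hs1⟩, hs0⟩ := ((hev'.and hlt).and self_mem_nhdsWithin).exists
  have hs0 : 0 < s := hs0
  refine ⟨s, hs0, hs1, ?_⟩
  rw [slope_def_field, h0, sub_zero, div_neg_iff] at hs
  have hs' := (hs.resolve_left fun h => lt_asymm h.2 hs0).1
  simp only [Pi.mul_apply, one_mul, neg_mul, ← sub_eq_add_neg] at hs'
  linarith

lemma exists_rate {a b : ℝ} (ha : 0 < a) (hab : a * b < 1) :
    ∃ ρ : ℝ, 0 < ρ ∧ ρ < 1 ∧ a ^ ρ * b ≤ 1 := by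
  have hc : Continuous fun ρ : ℝ => a ^ ρ * b :=
    (Real.continuous_const_rpow ha.ne').mul continuous_const
  have hev : ∀ᶠ ρ in nhds (1 : ℝ), a ^ ρ * b < 1 :=
    hc.continuousAt.eventually_lt continuousAt_const (by simpa using hab)
  have h2 : ∀ᶠ ρ in nhds (1 : ℝ), 0 < ρ := eventually_gt_nhds one_pos
  obtain ⟨ρ, ⟨h, h0⟩, h1⟩ := (((hev.and h2).filter_mono nhdsWithin_le_nhds).and
    (self_mem_nhdsWithin (s := Set.Iio (1 : ℝ)))).exists
  exact ⟨ρ, h0, h1, h.le⟩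

lemma le_pow_of_sq_le {x y c u : ℝ≥0∞} {ρ : ℝ} {n N i : ℕ} (hx1 : x ≤ 1)
    (hxy : x ^ ρ * y ≤ 1) (hN : ρ * n ≤ N) (hc : c ^ 2 = x)
    (hu : u ^ 2 ≤ x ^ (i + N) * y ^ n) : u ≤ c ^ i := by
  have h1 : x ^ N ≤ (x ^ ρ) ^ n := by
    rw [← ENNReal.rpow_natCast x, ← ENNReal.rpow_natCast, ← ENNReal.rpow_mul]
    exact ENNReal.rpow_le_rpow_of_exponent_ge hx1 hN
  have h2 : x ^ N * y ^ n ≤ 1 := by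
    refine (mul_le_mul_left h1 _).trans ?_
    rw [← mul_pow]
    exact pow_le_one₀ bot_le hxy
  have h3 : u ^ 2 ≤ (c ^ i) ^ 2 := by
    calc u ^ 2 ≤ x ^ i * (x ^ N * y ^ n) := by rwa [← mul_assoc, ← pow_add]
      _ ≤ x ^ i * 1 := mul_le_mul_right h2 _
      _ = (c ^ i) ^ 2 := by rw [mul_one, ← hc, ← pow_mul, ← pow_mul, mul_comm]
  exact (ENNReal.pow_le_pow_left_iff two_ne_zero).1 h3

lemma tsum_le_of_sq_le {x y : ℝ≥0∞} {ρ : ℝ} (hρ : 0 ≤ ρ) (hx1 : x ≤ 1)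
    (hxy : x ^ ρ * y ≤ 1) (n : ℕ) {U : ℕ → ℝ≥0∞} (hU1 : ∀ t, U t ≤ 1)
    (hU : ∀ t, U t ^ 2 ≤ x ^ t * y ^ n) :
    ∑' t, U t ≤ ENNReal.ofReal ρ * n + (1 + (1 - x ^ (2⁻¹ : ℝ))⁻¹) := by
  obtain ⟨N, hN1, hN2⟩ : ∃ N : ℕ, ρ * n ≤ N ∧ (N : ℝ) ≤ ρ * n + 1 :=
    ⟨⌈ρ * n⌉₊, Nat.le_ceil _, (Nat.ceil_lt_add_one (by positivity)).le⟩
  have hc2 : (x ^ (2⁻¹ : ℝ)) ^ 2 = x := by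
    rw [← ENNReal.rpow_natCast, ← ENNReal.rpow_mul]
    norm_num
  have hhead : ∑ t ∈ range N, U t ≤ ENNReal.ofReal ρ * n + 1 := by
    calc ∑ t ∈ range N, U t ≤ ∑ t ∈ range N, 1 := Finset.sum_le_sum fun t _ => hU1 t
      _ = ENNReal.ofReal N := by simp
      _ ≤ ENNReal.ofReal (ρ * n + 1) := ENNReal.ofReal_le_ofReal hN2
      _ = ENNReal.ofReal ρ * n + 1 := by
        rw [ENNReal.ofReal_add (by positivity) zero_le_one, ENNReal.ofReal_mul hρ,
          ENNReal.ofReal_one, ENNReal.ofReal_natCast]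
  have htail : ∑' i, U (i + N) ≤ (1 - x ^ (2⁻¹ : ℝ))⁻¹ := by
    rw [← ENNReal.tsum_geometric]
    exact ENNReal.tsum_le_tsum fun i => le_pow_of_sq_le hx1 hxy hN1 hc2 (hU _)
  calc ∑' t, U t = ∑ t ∈ range N, U t + ∑' i, U (i + N) :=
        (ENNReal.summable.sum_add_tsum_nat_add' (f := U)).symm
    _ ≤ (ENNReal.ofReal ρ * n + 1) + (1 - x ^ (2⁻¹ : ℝ))⁻¹ := add_le_add hhead htail
    _ = _ := add_assoc _ _ _

end Entropy

section Decoder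

variable {A B : Type*} [Fintype A] [Fintype B]

/-- `dec` turns a stream of letters with law `P` into a word with `n` independent letters of
law `Q`. Words are read with the latest letter first, `none` means that more letters are
required, and `K` bounds the mean number of letters consumed. -/
structure IsDecoder (P : A → ℝ≥0∞) (Q : B → ℝ≥0∞) (n : ℕ) (K : ℝ≥0∞)
    (dec : List A → Option (ℕ → B)) : Prop where
  cons : ∀ a w g, dec w = some g → dec (a :: w) = some g
  law : ∀ (τ : ℕ → B → ℝ≥0∞) (t : ℕ),
    markovIter P (fun w a => a :: w)
      (fun w => (dec w).elim 0 fun g => ∏ i ∈ range n, τ i (g i)) t [] ≤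
        ∏ i ∈ range n, ∑ b, Q b * τ i b
  time : ∑' t, markovIter P (fun w a => a :: w) (fun w => (dec w).elim 1 fun _ => 0) t [] ≤ K

lemma exists_isDecoder [Nonempty B] {p : A → ℝ} {q : B → ℝ} (hp : IsProbVector p)
    (hq : IsProbVector q) (hH : vecEntropy q < vecEntropy p) :
    ∃ (ρ : ℝ) (C : ℝ≥0∞) (dec : ℕ → List A → Option (ℕ → B)), 0 < ρ ∧ ρ < 1 ∧ C ≠ ∞ ∧
      ∀ n, IsDecoder (fun a => ENNReal.ofReal (p a)) (fun b => ENNReal.ofReal (q b)) n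
        (ENNReal.ofReal ρ * n + C) (dec n) := by
  classical
  obtain ⟨s, hs0, hs1, hs⟩ := exists_exponent hp hq hH
  have hA : Nonempty A := by
    by_contra h
    rw [not_nonempty_iff] at h
    simpa using hp.2
  have hx0 : 0 < ∑ a, p a ^ (1 + s) :=
    Finset.sum_pos (fun a _ => Real.rpow_pos_of_pos (hp.1 a) _) Finset.univ_nonempty
  have hy1 : 1 ≤ ∑ b, q b ^ (1 - s) := by
    refine hq.2.ge.trans (Finset.sum_le_sum fun b _ => ?_)
    have hb1 : q b ≤ 1 := by
      rw [← hq.2]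
      exact Finset.single_le_sum (fun b _ => (hq.1 b).le) (Finset.mem_univ b)
    calc q b = q b ^ (1 : ℝ) := (Real.rpow_one _).symm
      _ ≤ q b ^ (1 - s) := Real.rpow_le_rpow_of_exponent_ge (hq.1 b) hb1 (by linarith)
  have hx1 : ∑ a, p a ^ (1 + s) < 1 := by nlinarith
  obtain ⟨ρ, hρ0, hρ1, hρ⟩ := exists_rate hx0 hs
  set P : A → ℝ≥0∞ := fun a => ENNReal.ofReal (p a) with hPdef
  set Q : B → ℝ≥0∞ := fun b => ENNReal.ofReal (q b) with hQdef
  have hP : ∑ a, P a = 1 := by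
    rw [← ENNReal.ofReal_sum_of_nonneg fun a _ => (hp.1 a).le, hp.2, ENNReal.ofReal_one]
  have hQ : ∑ b, Q b = 1 := by
    rw [← ENNReal.ofReal_sum_of_nonneg fun a _ => (hq.1 a).le, hq.2, ENNReal.ofReal_one]
  have hP0 : ∀ a, P a ≠ 0 := fun a => by simpa [hPdef] using hp.1 a
  have hxP : ∑ a, P a ^ (1 + s) = ENNReal.ofReal (∑ a, p a ^ (1 + s)) := by
    rw [ENNReal.ofReal_sum_of_nonneg fun a _ => Real.rpow_nonneg (hp.1 a).le _]
    exact Finset.sum_congr rfl fun a _ =>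
      ENNReal.ofReal_rpow_of_pos (hp.1 a)
  have hyQ : ∑ b, Q b ^ (1 - s) = ENNReal.ofReal (∑ b, q b ^ (1 - s)) := by
    rw [ENNReal.ofReal_sum_of_nonneg fun a _ => Real.rpow_nonneg (hq.1 a).le _]
    exact Finset.sum_congr rfl fun a _ =>
      ENNReal.ofReal_rpow_of_pos (hq.1 a)
  have hxP1 : ∑ a, P a ^ (1 + s) < 1 := by
    rw [hxP, ← ENNReal.ofReal_one]
    exact (ENNReal.ofReal_lt_ofReal_iff one_pos).2 hx1
  have hxy : (∑ a, P a ^ (1 + s)) ^ ρ * ∑ b, Q b ^ (1 - s) ≤ 1 := by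
    rw [hxP, hyQ, ENNReal.ofReal_rpow_of_pos hx0, ← ENNReal.ofReal_mul (by positivity)]
    simpa using ENNReal.ofReal_le_ofReal hρ
  have hdec : ∀ n : ℕ, ∃ dec : List A → Option (ℕ → B), IsDecoder P Q n
      (ENNReal.ofReal ρ * n + (1 + (1 - (∑ a, P a ^ (1 + s)) ^ (2⁻¹ : ℝ))⁻¹)) dec := by
    intro n
    set π : (Fin n → B) → ℝ≥0∞ := fun g => ∏ i, Q (g i) with hπdef
    have hπ : ∑ g, π g = 1 := by
      rw [hπdef, ← Fintype.sum_pow, hQ, one_pow]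
    obtain ⟨f, hf1, hf2⟩ := exists_greedy_decoder hP π
    let ext : (Fin n → B) → ℕ → B := fun g i =>
      if h : i < n then g ⟨i, h⟩ else Classical.arbitrary B
    have helim : ∀ (w : List A) (c : ℝ≥0∞) (F : (ℕ → B) → ℝ≥0∞),
        ((f w).map ext).elim c F = (f w).elim c fun g => F (ext g) := by
      intro w c F
      cases f w <;> rfl
    refine ⟨fun w => (f w).map ext, ⟨?_, ?_, ?_⟩⟩
    · intro a w g h
      obtain ⟨g', h1, rfl⟩ := Option.map_eq_some_iff.1 h
      simp [hf1 a w g' h1]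
    · intro τ t
      have hprod : ∀ g : Fin n → B, ∏ i ∈ range n, τ i (ext g i) = ∏ i : Fin n, τ i (g i) := by
        intro g
        rw [← Fin.prod_univ_eq_prod_range (fun i => τ i (ext g i))]
        simp [ext]
      simp only [helim]
      rw [markovIter_cons_nil, sum_load_add_sum_none, zero_mul, add_zero,
        ← Fin.prod_univ_eq_prod_range (fun i => ∑ b, Q b * τ i b), Finset.prod_univ_sum,
        Fintype.piFinset_univ]
      refine Finset.sum_le_sum fun g _ => ?_
      rw [Finset.prod_mul_distrib, hprod]
      gcongr
      exact (hf2 t).1 g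
    · simp only [helim]
      simp_rw [markovIter_cons_nil]
      refine tsum_le_of_sq_le hρ0.le hxP1.le hxy n (fun t => ?_) fun t => ?_
      · refine (Finset.sum_le_sum fun w _ => ?_).trans_eq (sum_wordWeight hP t)
        cases f w <;> simp
      · have hsum : (∑ b, Q b ^ (1 - s)) ^ n = ∑ g, π g ^ (1 - s) := by
          rw [Fintype.sum_pow]
          refine Finset.sum_congr rfl fun g _ => ?_
          rw [hπdef, ENNReal.prod_rpow_of_nonneg (by linarith)]
        rw [hsum, ← sum_wordWeight_rpow P (by linarith)]
        exact sq_sum_none_le f (sum_wordWeight hP t) hπ (fun w _ => wordWeight_ne_zero hP0 w)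
          (hf2 t).2 hs0 hs1
  choose dec hdec using hdec
  refine ⟨ρ, _, dec, hρ0, hρ1, ?_, hdec⟩
  refine ENNReal.add_ne_top.2 ⟨ENNReal.one_ne_top, ENNReal.inv_ne_top.2 ?_⟩
  exact (tsub_pos_of_lt (ENNReal.rpow_lt_one hxP1 (by norm_num))).ne'

end Decoder

section Stack

variable {A B : Type*}

/-- The total number of output letters promised by a stack of jobs. -/
def jobsLen : List (ℕ × List A) → ℕ
  | [] => 0
  | j :: l => jobsLen l + j.1

lemma jobsLen_append (l o : List (ℕ × List A)) : jobsLen (l ++ o) = jobsLen l + jobsLen o := by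
  induction l with
  | nil => simp [jobsLen]
  | cons j l ih => simp only [List.cons_append, jobsLen, ih]; omega

variable (dec : ℕ → List A → Option (ℕ → B))

/-- The letter `x` is given to the first unfinished job. -/
def feed : List (ℕ × List A) → A → List (ℕ × List A)
  | [], _ => []
  | j :: l, x => if (dec j.1 j.2).isNone then (j.1, x :: j.2) :: l else j :: feed l x

/-- The `k`-th output letter of a stack of jobs, whose last entry produces the first letters. -/
def output : List (ℕ × List A) → ℕ → Option B
  | [], _ => none
  | j :: l, k =>
    if k < jobsLen l then output l k
    else if k < jobsLen l + j.1 then (dec j.1 j.2).map fun g => g (k - jobsLen l) else none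

lemma jobsLen_feed (l : List (ℕ × List A)) (x : A) : jobsLen (feed dec l x) = jobsLen l := by
  induction l with
  | nil => rfl
  | cons j l ih =>
    rw [feed]
    split_ifs
    · rfl
    · simp only [jobsLen, ih]

lemma lt_jobsLen_of_output {l : List (ℕ × List A)} {k : ℕ} {b : B}
    (h : output dec l k = some b) : k < jobsLen l := by
  cases l with
  | nil => simp [output] at h
  | cons j l =>
    rw [output] at h
    rw [jobsLen]
    split_ifs at h <;> omega

lemma output_eq_none {l : List (ℕ × List A)} {k : ℕ} (h : jobsLen l ≤ k) :
    output dec l k = none := by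
  cases hk : output dec l k with
  | none => rfl
  | some b => exact absurd (lt_jobsLen_of_output dec hk) (by omega)

lemma output_append (l o : List (ℕ × List A)) (k : ℕ) :
    output dec (l ++ o) (jobsLen o + k) = output dec l k := by
  induction l with
  | nil => simpa [output] using output_eq_none dec (by omega)
  | cons j l ih =>
    rw [List.cons_append, output, output, ih, jobsLen_append,
      show jobsLen o + k - (jobsLen l + jobsLen o) = k - jobsLen l by omega]
    congr 1
    · exact propext ⟨fun h => by omega, fun h => by omega⟩
    · congr 1
      exact propext ⟨fun h => by omega, fun h => by omega⟩

lemma exists_output {l : List (ℕ × List A)} {k : ℕ} (hk : k < jobsLen l)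
    (h : ¬ ∃ j ∈ l, dec j.1 j.2 = none) : ∃ b, output dec l k = some b := by
  induction l with
  | nil => simp [jobsLen] at hk
  | cons j l ih =>
    rw [jobsLen] at hk
    rw [output]
    push Not at h
    split_ifs with h1
    · exact ih h1 (by push Not; exact fun i hi => h i (List.mem_cons_of_mem _ hi))
    · obtain ⟨g, hg⟩ := Option.ne_none_iff_exists'.1 (h j List.mem_cons_self)
      exact ⟨_, by rw [hg]; rfl⟩

lemma feed_append (l o : List (ℕ × List A)) (x : A) :
    ∃ o', jobsLen o' = jobsLen o ∧ feed dec (l ++ o) x = feed dec l x ++ o' := by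
  induction l with
  | nil => exact ⟨feed dec o x, jobsLen_feed dec o x, rfl⟩
  | cons j l ih =>
    obtain ⟨o', h1, h2⟩ := ih
    rw [List.cons_append, feed, feed]
    split_ifs
    · exact ⟨o, rfl, rfl⟩
    · exact ⟨o', h1, by rw [h2]; rfl⟩

variable {dec} in
lemma output_feed (hdec : ∀ n a w g, dec n w = some g → dec n (a :: w) = some g)
    {l : List (ℕ × List A)} {k : ℕ} {b : B} (x : A) (h : output dec l k = some b) :
    output dec (feed dec l x) k = some b := by
  induction l with
  | nil => simp [output] at h
  | cons j l ih =>
    rw [feed]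
    rw [output] at h
    split_ifs with hj
    · rw [output]
      split_ifs with h1 h2
      · rwa [if_pos h1] at h
      · rw [if_neg h1, if_pos h2] at h
        obtain ⟨g, hg, hgb⟩ := Option.map_eq_some_iff.1 h
        rw [hdec _ _ _ _ hg]
        exact congrArg some hgb
      · rw [if_neg h1, if_neg h2] at h
        exact absurd h (by simp)
    · rw [output, jobsLen_feed]
      split_ifs with h1 h2
      · rw [if_pos h1] at h
        exact ih h
      · rwa [if_neg h1, if_pos h2] at h
      · rw [if_neg h1, if_neg h2] at h
        exact absurd h (by simp)

/-- The state of the coding machine: the number `gap` of further marker letters needed before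
the next marker, the number `age` of letters read since the last marker, and the stack of jobs
with the newest one first. -/
structure Machine (A : Type*) where
  gap : ℕ
  age : ℕ
  jobs : List (ℕ × List A)

/-- The initial state. -/
def Machine.start : Machine A := ⟨0, 0, []⟩

open Classical in
/-- The transition of the coding machine. A marker is a run of `r + 1` letters `a`; it
creates a job which has to fill all the positions read since the preceding marker. -/
def Machine.step (a : A) (r : ℕ) (σ : Machine A) (x : A) : Machine A :=
  if x = a then
    if σ.gap = 0 then ⟨0, 0, (σ.age + 1, []) :: feed dec σ.jobs x⟩
    else ⟨σ.gap - 1, σ.age + 1, feed dec σ.jobs x⟩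
  else ⟨r, σ.age + 1, feed dec σ.jobs x⟩

/-- The state reached after reading a word. -/
def Machine.run (a : A) (r : ℕ) (σ : Machine A) (w : List A) : Machine A :=
  w.foldl (Machine.step dec a r) σ

variable {a : A} {r : ℕ}

lemma Machine.run_append (σ : Machine A) (v w : List A) :
    σ.run dec a r (v ++ w) = (σ.run dec a r v).run dec a r w :=
  List.foldl_append

lemma Machine.run_cons (σ : Machine A) (x : A) (w : List A) :
    σ.run dec a r (x :: w) = (σ.step dec a r x).run dec a r w := rfl

lemma Machine.age_add_step (σ : Machine A) (x : A) :
    (σ.step dec a r x).age + jobsLen (σ.step dec a r x).jobs = σ.age + jobsLen σ.jobs + 1 := by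
  unfold Machine.step
  split_ifs <;> simp only [jobsLen, jobsLen_feed] <;> omega

lemma Machine.age_add_run (σ : Machine A) (w : List A) :
    (σ.run dec a r w).age + jobsLen (σ.run dec a r w).jobs =
      σ.age + jobsLen σ.jobs + w.length := by
  induction w generalizing σ with
  | nil => rfl
  | cons x w ih =>
    rw [Machine.run_cons, ih, Machine.age_add_step, List.length_cons]
    omega

lemma Machine.gap_step_le {σ : Machine A} (h : σ.gap ≤ r) (x : A) :
    (σ.step dec a r x).gap ≤ r := by
  unfold Machine.step
  split_ifs <;> dsimp only <;> omega

lemma Machine.gap_run_le {σ : Machine A} (h : σ.gap ≤ r) (w : List A) :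
    (σ.run dec a r w).gap ≤ r := by
  induction w generalizing σ with
  | nil => exact h
  | cons x w ih => exact ih (Machine.gap_step_le dec h x)

lemma Machine.run_replicate {σ : Machine A} {n : ℕ} (h : σ.gap ≤ n) :
    (σ.run dec a r (List.replicate (n + 1) a)).gap = 0 ∧
      (σ.run dec a r (List.replicate (n + 1) a)).age = 0 := by
  induction n generalizing σ with
  | zero => simp [Machine.run, Machine.step, Nat.le_zero.1 h]
  | succ n ih =>
    rw [List.replicate_succ, Machine.run_cons]
    refine ih ?_
    rw [Machine.step, if_pos rfl]
    split_ifs <;> dsimp only <;> omega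

lemma Machine.step_append (d n : ℕ) (l o : List (ℕ × List A)) (x : A) :
    ∃ o', jobsLen o' = jobsLen o ∧ Machine.step dec a r ⟨d, n, l ++ o⟩ x =
      ⟨(Machine.step dec a r ⟨d, n, l⟩ x).gap, (Machine.step dec a r ⟨d, n, l⟩ x).age,
        (Machine.step dec a r ⟨d, n, l⟩ x).jobs ++ o'⟩ := by
  obtain ⟨o', h1, h2⟩ := feed_append dec l o x
  refine ⟨o', h1, ?_⟩
  unfold Machine.step
  split_ifs <;> simp [h2]

lemma Machine.run_jobs_append (d n : ℕ) (l o : List (ℕ × List A)) (w : List A) :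
    ∃ o', jobsLen o' = jobsLen o ∧ (Machine.run dec a r ⟨d, n, l ++ o⟩ w).jobs =
      (Machine.run dec a r ⟨d, n, l⟩ w).jobs ++ o' := by
  induction w generalizing d n l o with
  | nil => exact ⟨o, rfl, rfl⟩
  | cons x w ih =>
    obtain ⟨o₁, h1, h2⟩ := Machine.step_append dec (a := a) (r := r) d n l o x
    obtain ⟨o₂, h3, h4⟩ := ih (Machine.step dec a r ⟨d, n, l⟩ x).gap
      (Machine.step dec a r ⟨d, n, l⟩ x).age (Machine.step dec a r ⟨d, n, l⟩ x).jobs o₁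
    exact ⟨o₂, h3.trans h1, by rw [Machine.run_cons, h2, h4]; rfl⟩

variable {dec}

lemma Machine.output_step (hdec : ∀ n a w g, dec n w = some g → dec n (a :: w) = some g)
    {σ : Machine A} {k : ℕ} {b : B} (x : A) (h : output dec σ.jobs k = some b) :
    output dec (σ.step dec a r x).jobs k = some b := by
  have h1 := output_feed hdec x h
  unfold Machine.step
  split_ifs
  · dsimp only
    rw [output, if_pos (lt_jobsLen_of_output dec h1)]
    exact h1
  · exact h1
  · exact h1

lemma Machine.output_run (hdec : ∀ n a w g, dec n w = some g → dec n (a :: w) = some g)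
    {σ : Machine A} {k : ℕ} {b : B} (w : List A) (h : output dec σ.jobs k = some b) :
    output dec (σ.run dec a r w).jobs k = some b := by
  induction w generalizing σ with
  | nil => exact h
  | cons x w ih => exact ih (Machine.output_step hdec x h)

/-- `x` has a marker that ends just before position `v`. -/
def IsMarker (a : A) (r : ℕ) (x : ℤ → A) (v : ℤ) : Prop :=
  ∀ i, v - (r + 1) ≤ i → i < v → x i = a

lemma Machine.run_isMarker {x : ℤ → A} {u : ℤ} {n : ℕ} (h : IsMarker a r x (u + n)) :
    (Machine.start.run dec a r (seg x u n)).gap = 0 ∧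
      (Machine.start.run dec a r (seg x u n)).age = 0 := by
  rcases Nat.lt_or_ge n (r + 1) with hn | hn
  · cases n with
    | zero => exact ⟨rfl, rfl⟩
    | succ n =>
      rw [seg_eq_replicate fun i h1 h2 => h i (by push_cast; omega) h2]
      exact Machine.run_replicate dec (Nat.zero_le _)
  · obtain ⟨t, rfl⟩ := Nat.exists_eq_add_of_le' hn
    have hseg : seg x (u + t) (r + 1) = List.replicate (r + 1) a :=
      seg_eq_replicate fun i h1 h2 => h i (by push_cast; omega) (by push_cast at h2 ⊢; omega)
    rw [seg_add, Machine.run_append, hseg]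
    exact Machine.run_replicate dec (Machine.gap_run_le dec (r := r) (σ := Machine.start)
      (Nat.zero_le r) _)

lemma Machine.jobsLen_run_isMarker {x : ℤ → A} {u : ℤ} {n : ℕ} (h : IsMarker a r x (u + n)) :
    jobsLen (Machine.start.run dec a r (seg x u n)).jobs = n := by
  have h1 := Machine.age_add_run dec (a := a) (r := r) Machine.start (seg x u n)
  rw [(Machine.run_isMarker h).2, length_seg] at h1
  simpa [Machine.start, jobsLen] using h1

/-- A machine started earlier produces the same output as one started at a marker. -/
lemma Machine.output_run_add {x : ℤ → A} {u : ℤ} {n : ℕ} (h : IsMarker a r x (u + n))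
    (t k : ℕ) :
    output dec (Machine.start.run dec a r (seg x u (n + t))).jobs (n + k) =
      output dec (Machine.start.run dec a r (seg x (u + n) t)).jobs k := by
  rw [seg_add, Machine.run_append]
  obtain ⟨h1, h2⟩ := Machine.run_isMarker (dec := dec) h
  have h3 := Machine.jobsLen_run_isMarker (dec := dec) h
  generalize Machine.start.run dec a r (seg x u n) = σ at h1 h2 h3 ⊢
  obtain ⟨d, m, o⟩ := σ
  dsimp only at h1 h2 h3
  subst h1 h2
  obtain ⟨o', h4, h5⟩ := Machine.run_jobs_append dec (a := a) (r := r) 0 0 [] o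
    (seg x (u + n) t)
  rw [List.nil_append] at h5
  rw [h5, ← h3, ← h4, output_append]
  rfl

end Stack

section Termination

variable {A B : Type*} [Fintype A] {P : A → ℝ≥0∞}

/-- The expected number of letters a decoder still has to read after the word `w`. -/
def remaining (P : A → ℝ≥0∞) (f : List A → Option (ℕ → B)) (w : List A) : ℝ≥0∞ :=
  ∑' t, markovIter P (fun w a => a :: w) (fun w => (f w).elim 1 fun _ => 0) t w

lemma remaining_eq (f : List A → Option (ℕ → B)) (w : List A) :
    remaining P f w = (f w).elim 1 (fun _ => 0) + ∑ a, P a * remaining P f (a :: w) := by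
  unfold remaining
  rw [tsum_eq_zero_add' ENNReal.summable]
  congr 1
  simp_rw [← ENNReal.tsum_mul_left]
  rw [← Summable.tsum_finsetSum fun _ _ => ENNReal.summable]
  rfl

/-- The expected number of letters needed to finish all the jobs of a stack. -/
def jobsWork (P : A → ℝ≥0∞) (dec : ℕ → List A → Option (ℕ → B)) :
    List (ℕ × List A) → ℝ≥0∞
  | [] => 0
  | j :: l => jobsWork P dec l + remaining P (dec j.1) j.2

variable (dec : ℕ → List A → Option (ℕ → B))

lemma sum_jobsWork_feed_add_one (hP : ∑ a, P a = 1) {l : List (ℕ × List A)}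
    (h : ∃ j ∈ l, dec j.1 j.2 = none) :
    ∑ x, P x * jobsWork P dec (feed dec l x) + 1 = jobsWork P dec l := by
  induction l with
  | nil => simp at h
  | cons j l ih =>
    simp only [feed]
    by_cases hj : dec j.1 j.2 = none
    · simp only [hj, Option.isNone_none, if_true, jobsWork]
      rw [remaining_eq, hj]
      simp only [mul_add, Finset.sum_add_distrib, ← Finset.sum_mul, hP, one_mul,
        Option.elim_none]
      ring
    · have h' : ∃ j ∈ l, dec j.1 j.2 = none := by simpa [hj] using h
      simp only [Option.isNone_iff_eq_none, hj, if_false, jobsWork]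
      rw [← ih h']
      simp only [mul_add, Finset.sum_add_distrib, ← Finset.sum_mul, hP, one_mul]
      ring

lemma sum_jobsWork_feed_le (hP : ∑ a, P a = 1) (l : List (ℕ × List A)) :
    ∑ x, P x * jobsWork P dec (feed dec l x) ≤ jobsWork P dec l := by
  induction l with
  | nil => simp [feed, jobsWork]
  | cons j l ih =>
    simp only [feed]
    split_ifs
    · simp only [jobsWork]
      rw [remaining_eq (w := j.2)]
      simp only [mul_add, Finset.sum_add_distrib, ← Finset.sum_mul, hP, one_mul]
      gcongr
      exact le_add_self
    · simp only [jobsWork]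
      simp only [mul_add, Finset.sum_add_distrib, ← Finset.sum_mul, hP, one_mul]
      gcongr

lemma sum_mul_ite_eq [DecidableEq A] (a : A) (c e : ℝ≥0∞) :
    ∑ x, P x * (if x = a then c else e) = P a * c + (∑ x ∈ univ.erase a, P x) * e := by
  rw [← Finset.add_sum_erase _ _ (Finset.mem_univ a), Finset.sum_mul, if_pos rfl]
  congr 1
  exact Finset.sum_congr rfl fun x hx => by rw [if_neg (Finset.ne_of_mem_erase hx)]

/-- The potential of a state of the machine: the work still to be done, in mean. -/
def Machine.potential (P : A → ℝ≥0∞) (ρ C κ α : ℝ≥0∞) (σ : Machine A) : ℝ≥0∞ :=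
  jobsWork P dec σ.jobs + ρ * σ.age + C * (κ * α ^ σ.gap)

variable {a : A} {r : ℕ} {ρ C κ β : ℝ≥0∞}

variable {dec} in
lemma Machine.sum_potential_step_le [DecidableEq A] (hP : ∑ a, P a = 1)
    (hβ : ∑ x ∈ univ.erase a, P x = β) (hκ : β * κ = P a)
    (htime : ∀ n : ℕ, remaining P (dec n) [] ≤ ρ * n + C) (σ : Machine A) :
    ∑ x, P x * (σ.step dec a r x).potential dec P ρ C κ (P a) ≤
      ∑ x, P x * jobsWork P dec (feed dec σ.jobs x) + (ρ + C * P a ^ (r + 1)) +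
        (ρ * σ.age + C * (κ * P a ^ σ.gap)) := by
  have hαβ : P a + β = 1 := by rw [← hβ, Finset.add_sum_erase _ _ (Finset.mem_univ a), hP]
  have hκ' : P a * (κ + 1) = κ := by
    rw [mul_add, mul_one]
    nth_rewrite 2 [← hκ]
    rw [← add_mul, hαβ, one_mul]
  have hstep : ∀ x, (σ.step dec a r x).potential dec P ρ C κ (P a) ≤
      jobsWork P dec (feed dec σ.jobs x) + ρ * (σ.age + 1) +
        C * (if x = a then (if σ.gap = 0 then κ + 1 else κ * P a ^ (σ.gap - 1))
          else κ * P a ^ r) := by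
    intro x
    unfold Machine.step Machine.potential
    split_ifs with h1 h2
    · simp only [jobsWork]
      calc _ ≤ jobsWork P dec (feed dec σ.jobs x) + (ρ * (σ.age + 1 : ℕ) + C) +
            ρ * (0 : ℕ) + C * (κ * P a ^ 0) := by
              gcongr
              exact htime _
        _ = _ := by push_cast; ring
    · push_cast; exact le_rfl
    · push_cast; exact le_rfl
  have hgap : ∑ x, P x * (if x = a then (if σ.gap = 0 then κ + 1 else κ * P a ^ (σ.gap - 1))
      else κ * P a ^ r) = κ * P a ^ σ.gap + P a ^ (r + 1) := by
    rw [sum_mul_ite_eq, hβ, ← mul_assoc β, hκ, ← pow_succ']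
    congr 1
    split_ifs with h
    · rw [hκ', h, pow_zero, mul_one]
    · obtain ⟨d, hd⟩ := Nat.exists_eq_succ_of_ne_zero h
      rw [hd, Nat.succ_sub_one, pow_succ]
      ring
  calc _ ≤ ∑ x, P x * (jobsWork P dec (feed dec σ.jobs x) + ρ * (σ.age + 1) +
        C * (if x = a then (if σ.gap = 0 then κ + 1 else κ * P a ^ (σ.gap - 1))
          else κ * P a ^ r)) := by
        gcongr with x
        exact hstep x
    _ = ∑ x, P x * jobsWork P dec (feed dec σ.jobs x) + ρ * (σ.age + 1) +
        C * (κ * P a ^ σ.gap + P a ^ (r + 1)) := by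
        rw [← hgap]
        simp only [mul_add, Finset.sum_add_distrib, ← Finset.sum_mul, hP, one_mul]
        rw [Finset.mul_sum]
        simp only [mul_left_comm C]
    _ = _ := by ring

lemma Machine.potential_run_ne_top [DecidableEq A] (hP : ∑ a, P a = 1) (hP0 : ∀ a, P a ≠ 0)
    (hβ : ∑ x ∈ univ.erase a, P x = β) (hκ : β * κ = P a)
    (htime : ∀ n : ℕ, remaining P (dec n) [] ≤ ρ * n + C) (hρ : ρ ≠ ∞) (hC : C ≠ ∞)
    {σ : Machine A} (hσ : σ.potential dec P ρ C κ (P a) ≠ ∞) (w : List A) :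
    (w.foldl (Machine.step dec a r) σ).potential dec P ρ C κ (P a) ≠ ∞ := by
  induction w generalizing σ with
  | nil => exact hσ
  | cons x w ih =>
    refine ih ?_
    have hPa : P a ≠ ∞ := by
      refine ne_top_of_le_ne_top ENNReal.one_ne_top (hP ▸ ?_)
      exact Finset.single_le_sum (fun _ _ => bot_le) (Finset.mem_univ a)
    have h1 := (Machine.sum_potential_step_le (r := r) hP hβ hκ htime σ).trans
      (add_le_add_left (add_le_add_left (sum_jobsWork_feed_le dec hP σ.jobs) _) _)
    have h2 : P x * (σ.step dec a r x).potential dec P ρ C κ (P a) ≠ ∞ := by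
      refine ne_top_of_le_ne_top ?_ ((Finset.single_le_sum (fun _ _ => bot_le)
        (Finset.mem_univ x)).trans h1)
      unfold Machine.potential at hσ
      simp only [ENNReal.add_ne_top] at hσ ⊢
      exact ⟨⟨hσ.1.1, hρ, ENNReal.mul_ne_top hC (ENNReal.pow_ne_top hPa)⟩, hσ.1.2, hσ.2⟩
    intro h
    rw [h, ENNReal.mul_top (hP0 x)] at h2
    exact h2 rfl

end Termination

section TerminationMeasure

variable {A B : Type*} [Fintype A] [Nonempty A] [MeasurableSpace A] [DiscreteMeasurableSpace A]
  {p : A → ℝ} {μ : Measure (ℤ → A)}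

lemma ae_exists_all_finished (hp : IsProbVector p) (hμ : IsBernoulliMeasure μ p)
    {dec : ℕ → List A → Option (ℕ → B)} {a : A} (ha : p a < 1) {r : ℕ} {ρ C : ℝ≥0∞}
    (hC : C ≠ ∞) (hr : ρ + C * ENNReal.ofReal (p a) ^ (r + 1) < 1)
    (htime : ∀ n : ℕ, remaining (fun a => ENNReal.ofReal (p a)) (dec n) [] ≤ ρ * n + C)
    (u : ℤ) (T : ℕ) :
    ∀ᵐ x ∂μ, ∃ t ≥ T, ¬ ∃ j ∈ (Machine.start.run dec a r (seg x u t)).jobs,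
      dec j.1 j.2 = none := by
  classical
  set P : A → ℝ≥0∞ := fun a => ENNReal.ofReal (p a) with hPdef
  have hP : ∑ a, P a = 1 := by
    rw [← ENNReal.ofReal_sum_of_nonneg fun a _ => (hp.1 a).le, hp.2, ENNReal.ofReal_one]
  have hP0 : ∀ a, P a ≠ 0 := fun a => by simpa [hPdef] using hp.1 a
  have hαβ : P a + ∑ x ∈ univ.erase a, P x = 1 := by
    rw [Finset.add_sum_erase _ _ (Finset.mem_univ a), hP]
  generalize hβ : ∑ x ∈ univ.erase a, P x = β at hαβ
  have hβ0 : β ≠ 0 := by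
    rintro rfl
    rw [add_zero, hPdef, ENNReal.ofReal_eq_one] at hαβ
    exact ha.ne hαβ
  have hβt : β ≠ ∞ := ne_top_of_le_ne_top ENNReal.one_ne_top (hαβ ▸ le_add_self)
  have hκ : β * (P a / β) = P a := ENNReal.mul_div_cancel hβ0 hβt
  have hρ : ρ ≠ ∞ := ne_top_of_le_ne_top ENNReal.one_ne_top (le_self_add.trans hr.le)
  obtain ⟨δ, hδ0, hδ⟩ : ∃ δ ≠ 0, ρ + C * P a ^ (r + 1) + δ = 1 :=
    ⟨_, (tsub_pos_of_lt hr).ne', add_tsub_cancel_of_le hr.le⟩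
  refine ae_exists_not_bad hp hμ (Machine.step dec a r)
    (fun σ => ∃ j ∈ σ.jobs, dec j.1 j.2 = none)
    (fun σ => σ.potential dec P ρ C (P a / β) (P a)) hδ0 ?_ Machine.start ?_ u T
  · intro σ hσ
    refine (add_le_add_left (Machine.sum_potential_step_le hP hβ hκ htime σ) _).trans ?_
    rw [Machine.potential, ← sum_jobsWork_feed_add_one dec hP hσ, ← hδ]
    exact le_of_eq (by ring)
  · refine Machine.potential_run_ne_top dec hP hP0 hβ hκ htime hρ hC ?_
    simp only [Machine.potential, Machine.start, jobsWork, pow_zero, mul_one, Nat.cast_zero,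
      mul_zero, zero_add]
    exact ENNReal.mul_ne_top hC (ENNReal.div_ne_top (by simp [hPdef]) hβ0)

end TerminationMeasure

section Markers

variable {A B : Type*}

/-- Before its first marker, a machine started with the largest gap has read `r - gap` marker
letters in a row. -/
lemma Machine.jobs_eq_nil_or_exists_isMarker (dec : ℕ → List A → Option (ℕ → B)) {a : A} {r : ℕ}
    (x : ℤ → A) (u : ℤ) (n : ℕ) :
    (∃ v, u ≤ v ∧ v ≤ u + n ∧ IsMarker a r x v) ∨
      ((seg x u n).foldl (Machine.step dec a r) ⟨r, 0, []⟩).jobs = [] ∧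
        ((seg x u n).foldl (Machine.step dec a r) ⟨r, 0, []⟩).gap ≤ r ∧
        ∀ i, u + n - (r - ((seg x u n).foldl (Machine.step dec a r) ⟨r, 0, []⟩).gap) ≤ i →
          i < u + n → x i = a := by
  induction n with
  | zero => exact Or.inr ⟨rfl, le_rfl, fun i h1 h2 => by simp [seg] at h1 h2; omega⟩
  | succ n ih =>
    rcases ih with ⟨v, h1, h2, h3⟩ | ⟨h1, h2, h3⟩
    · exact Or.inl ⟨v, h1, by push_cast; omega, h3⟩
    · rw [seg_add, List.foldl_append]
      generalize (seg x u n).foldl (Machine.step dec a r) ⟨r, 0, []⟩ = σ at h1 h2 h3 ⊢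
      simp only [seg, List.foldl_cons, List.foldl_nil]
      have hlast : x (u + n) = a → ∀ i, u + n - (r - σ.gap) ≤ i → i < u + n + 1 → x i = a := by
        intro hx i h4 h5
        rcases (Int.lt_add_one_iff.1 h5).lt_or_eq with h6 | h6
        · exact h3 i h4 h6
        · rw [h6, hx]
      unfold Machine.step
      split_ifs with h4 h5
      · refine Or.inl ⟨u + n + 1, by omega, by push_cast; omega, fun i h6 h7 => ?_⟩
        exact hlast h4 i (by rw [h5]; push_cast; omega) h7
      · refine Or.inr ⟨by simp [h1, feed], by dsimp only; omega, fun i h6 h7 => ?_⟩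
        dsimp only at h6
        exact hlast h4 i (by push_cast [Nat.one_le_iff_ne_zero.2 h5] at h6; omega)
          (by push_cast at h7; omega)
      · refine Or.inr ⟨by simp [h1, feed], le_rfl, fun i h6 h7 => ?_⟩
        dsimp only at h6
        push_cast at h6 h7
        omega

variable [Fintype A] {P : A → ℝ≥0∞}

lemma mul_geom_sum_add_pow {α β : ℝ≥0∞} (h : α + β = 1) (n : ℕ) :
    β * ∑ i ∈ range n, α ^ i + α ^ n = 1 := by
  induction n with
  | zero => simp
  | succ n ih =>
    calc _ = β * ∑ i ∈ range n, α ^ i + α ^ n * (α + β) := by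
          rw [Finset.sum_range_succ, pow_succ]; ring
      _ = 1 := by rw [h, mul_one, ih]

open Classical in
lemma Machine.sum_geom_step_le (dec : ℕ → List A → Option (ℕ → B)) {a : A} {r : ℕ}
    (hP : ∑ a, P a = 1) {σ : Machine A} (hσ : σ.jobs = []) :
    ∑ x, P x * (if (σ.step dec a r x).jobs = [] then
        ∑ i ∈ range ((σ.step dec a r x).gap + 1), P a ^ i else 0) + P a ^ (r + 1) ≤
      ∑ i ∈ range (σ.gap + 1), P a ^ i := by
  have hαβ : P a + ∑ x ∈ univ.erase a, P x = 1 := by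
    rw [Finset.add_sum_erase _ _ (Finset.mem_univ a), hP]
  have hstep : ∀ x, (if (σ.step dec a r x).jobs = [] then
        ∑ i ∈ range ((σ.step dec a r x).gap + 1), P a ^ i else 0) =
      if x = a then ∑ i ∈ range σ.gap, P a ^ i else ∑ i ∈ range (r + 1), P a ^ i := by
    intro x
    unfold Machine.step
    rw [hσ]
    split_ifs with h1 h2 h3 h4 <;> simp_all [feed]
    rw [Nat.sub_add_cancel (Nat.one_le_iff_ne_zero.2 ‹_›)]
  simp only [hstep]
  rw [sum_mul_ite_eq, add_assoc, mul_geom_sum_add_pow hαβ, Finset.sum_range_succ', pow_zero,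
    Finset.mul_sum]
  simp only [pow_succ']
  exact le_rfl

end Markers

section MarkersMeasure

variable {A : Type*} [Fintype A] [Nonempty A] [MeasurableSpace A] [DiscreteMeasurableSpace A]
  {p : A → ℝ} {μ : Measure (ℤ → A)}

lemma mul_measure_no_isMarker_le (hp : IsProbVector p) (hμ : IsBernoulliMeasure μ p) (a : A)
    (r : ℕ) (u : ℤ) (n : ℕ) :
    (n : ℝ≥0∞) * ENNReal.ofReal (p a) ^ (r + 1) *
        μ {x | ∀ v, u ≤ v → v ≤ u + n → ¬ IsMarker a r x v} ≤
      ∑ i ∈ range (r + 1), ENNReal.ofReal (p a) ^ i := by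
  classical
  have hP : ∑ a, ENNReal.ofReal (p a) = 1 := by
    rw [← ENNReal.ofReal_sum_of_nonneg fun a _ => (hp.1 a).le, hp.2, ENNReal.ofReal_one]
  let dec : ℕ → List A → Option (ℕ → Unit) := fun _ _ => none
  have h := mul_measure_forall_bad_le hp hμ (Machine.step dec a r) (fun σ => σ.jobs = [])
    (fun σ => if σ.jobs = [] then ∑ i ∈ range (σ.gap + 1), ENNReal.ofReal (p a) ^ i else 0)
    (ENNReal.ofReal (p a) ^ (r + 1)) (fun σ hσ => by
      rw [if_pos hσ]
      exact Machine.sum_geom_step_le (P := fun a => ENNReal.ofReal (p a)) dec hP hσ)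
    u n ⟨r, 0, []⟩
  rw [if_pos rfl] at h
  refine le_trans (mul_le_mul_right (measure_mono fun x hx => ?_) _) h
  intro t ht
  rcases Machine.jobs_eq_nil_or_exists_isMarker dec (a := a) (r := r) x u t with ⟨v, h1, h2, h3⟩ | h1
  · exact absurd h3 (hx v h1 (by omega))
  · exact h1.1

lemma ae_exists_isMarker_ge (hp : IsProbVector p) (hμ : IsBernoulliMeasure μ p) (a : A)
    (r : ℕ) (u : ℤ) : ∀ᵐ x ∂μ, ∃ v, u ≤ v ∧ IsMarker a r x v := by
  have h := tendsto_zero_of_mul_le (pow_ne_zero _ (by simpa using hp.1 a))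
    (ENNReal.sum_ne_top.2 fun i _ => ENNReal.pow_ne_top ENNReal.ofReal_ne_top)
    (mul_measure_no_isMarker_le hp hμ a r u)
  refine le_antisymm (ge_of_tendsto' h fun n => measure_mono fun x hx v h1 _ h3 => ?_) bot_le
  exact hx ⟨v, h1, h3⟩

lemma ae_exists_isMarker_le (hp : IsProbVector p) (hμ : IsBernoulliMeasure μ p) (a : A)
    (r : ℕ) (u : ℤ) : ∀ᵐ x ∂μ, ∃ v, v ≤ u ∧ IsMarker a r x v := by
  have h := tendsto_zero_of_mul_le (pow_ne_zero _ (by simpa using hp.1 a))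
    (ENNReal.sum_ne_top.2 fun i _ => ENNReal.pow_ne_top ENNReal.ofReal_ne_top)
    (fun n => mul_measure_no_isMarker_le hp hμ a r (u - n) n)
  refine le_antisymm (ge_of_tendsto' h fun n => measure_mono fun x hx v _ h2 h3 => ?_) bot_le
  exact hx ⟨v, by omega, h3⟩

end MarkersMeasure

section Law

variable {A B : Type*} [Fintype A] {P : A → ℝ≥0∞}

open Classical in
/-- The expected value of `∏ i < n, τ i (g i)` for the word `g` decoded after reading `w`;
it is set to `1` when the product is trivial. -/
def decValue (P : A → ℝ≥0∞) (f : List A → Option (ℕ → B)) (n : ℕ) (τ : ℕ → B → ℝ≥0∞)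
    (w : List A) : ℝ≥0∞ :=
  if ∀ i < n, τ i = 1 then 1 else
    ⨆ t, markovIter P (fun w a => a :: w)
      (fun w => (f w).elim 0 fun g => ∏ i ∈ range n, τ i (g i)) t w

lemma sum_decValue_cons_le (hP : ∑ a, P a = 1) {f : List A → Option (ℕ → B)}
    (hf : ∀ a w g, f w = some g → f (a :: w) = some g) (n : ℕ) (τ : ℕ → B → ℝ≥0∞)
    (w : List A) : ∑ a, P a * decValue P f n τ (a :: w) ≤ decValue P f n τ w := by
  unfold decValue
  split_ifs
  · simp [hP]
  · have hmono : ∀ w, Monotone fun t => markovIter P (fun w a => a :: w)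
        (fun w => (f w).elim 0 fun g => ∏ i ∈ range n, τ i (g i)) t w := by
      refine monotone_markovIter fun w => ?_
      cases h : f w with
      | none => exact bot_le
      | some g => simp [hf _ w g h, ← Finset.sum_mul, hP]
    simp only [ENNReal.mul_iSup]
    rw [ENNReal.finsetSum_iSup_of_monotone fun a => (hmono (a :: w)).const_mul' (P a)]
    exact iSup_le fun t => le_iSup_of_le (t + 1) le_rfl

/-- The expected value of the product of the `τ k` over all output letters of a stack. -/
def jobsValue (P : A → ℝ≥0∞) (dec : ℕ → List A → Option (ℕ → B)) (τ : ℕ → B → ℝ≥0∞) :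
    List (ℕ × List A) → ℝ≥0∞
  | [] => 1
  | j :: l => jobsValue P dec τ l * decValue P (dec j.1) j.1 (fun i => τ (jobsLen l + i)) j.2

lemma sum_jobsValue_feed_le {dec : ℕ → List A → Option (ℕ → B)} (hP : ∑ a, P a = 1)
    (hdec : ∀ n a w g, dec n w = some g → dec n (a :: w) = some g) (τ : ℕ → B → ℝ≥0∞)
    (l : List (ℕ × List A)) :
    ∑ x, P x * jobsValue P dec τ (feed dec l x) ≤ jobsValue P dec τ l := by
  induction l with
  | nil => simp [feed, jobsValue, hP]
  | cons j l ih =>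
    simp only [feed]
    split_ifs
    · simp only [jobsValue, mul_left_comm (P _), ← Finset.mul_sum]
      gcongr
      exact sum_decValue_cons_le hP (hdec j.1) _ _ _
    · simp only [jobsValue, jobsLen_feed, ← mul_assoc, ← Finset.sum_mul]
      gcongr

variable [Fintype B] {Q : B → ℝ≥0∞} {dec : ℕ → List A → Option (ℕ → B)} {K : ℕ → ℝ≥0∞}

lemma decValue_nil_le (hdec : ∀ n, IsDecoder P Q n (K n) (dec n)) (hQ : ∑ b, Q b = 1) (n : ℕ)
    (τ : ℕ → B → ℝ≥0∞) : decValue P (dec n) n τ [] ≤ ∏ i ∈ range n, ∑ b, Q b * τ i b := by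
  unfold decValue
  split_ifs with h
  · rw [Finset.prod_eq_one]
    intro i hi
    rw [h i (Finset.mem_range.1 hi)]
    simp [hQ]
  · exact iSup_le fun t => (hdec n).law τ t

lemma prod_range_mul_prod_ite (F : Finset ℕ) (c : ℕ → ℝ≥0∞) (s n : ℕ) :
    (∏ i ∈ range n, if s + i ∈ F then c (s + i) else 1) *
      ∏ k ∈ F, (if s + n ≤ k then c k else 1) = ∏ k ∈ F, if s ≤ k then c k else 1 := by
  induction n with
  | zero => simp
  | succ n ih =>
    rw [← ih, Finset.prod_range_succ, mul_assoc]
    congr 1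
    rw [← Finset.prod_ite_eq' F (s + n) c, ← Finset.prod_mul_distrib]
    refine Finset.prod_congr rfl fun k _ => ?_
    split_ifs <;> first | omega | simp

open Classical in
/-- The test functions for the event that the output agrees with `y` on `F`. -/
def indicatorTest (F : Finset ℕ) (y : ℕ → B) (k : ℕ) (b : B) : ℝ≥0∞ :=
  if k ∈ F then if b = y k then 1 else 0 else 1

lemma sum_mul_indicatorTest (hQ : ∑ b, Q b = 1) (F : Finset ℕ) (y : ℕ → B) (k : ℕ) :
    ∑ b, Q b * indicatorTest F y k b = if k ∈ F then Q (y k) else 1 := by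
  unfold indicatorTest
  split_ifs
  · rw [Finset.sum_eq_single (y k)] <;> simp +contextual
  · simp [hQ]

/-- The conditional probability of the event that the output agrees with `y` on `F`. -/
def Machine.value (P : A → ℝ≥0∞) (Q : B → ℝ≥0∞) (dec : ℕ → List A → Option (ℕ → B))
    (F : Finset ℕ) (y : ℕ → B) (σ : Machine A) : ℝ≥0∞ :=
  jobsValue P dec (indicatorTest F y) σ.jobs *
    ∏ k ∈ F, if jobsLen σ.jobs ≤ k then Q (y k) else 1

variable {a : A} {r : ℕ}

lemma Machine.sum_value_step_le (hP : ∑ a, P a = 1) (hQ : ∑ b, Q b = 1)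
    (hdec : ∀ n, IsDecoder P Q n (K n) (dec n)) (F : Finset ℕ) (y : ℕ → B) (σ : Machine A) :
    ∑ x, P x * (σ.step dec a r x).value P Q dec F y ≤ σ.value P Q dec F y := by
  have hstep : ∀ x, (σ.step dec a r x).value P Q dec F y ≤
      jobsValue P dec (indicatorTest F y) (feed dec σ.jobs x) *
        ∏ k ∈ F, if jobsLen σ.jobs ≤ k then Q (y k) else 1 := by
    intro x
    unfold Machine.step Machine.value
    split_ifs
    · simp only [jobsValue, jobsLen, jobsLen_feed]
      rw [mul_assoc]
      gcongr
      rw [← prod_range_mul_prod_ite F (fun k => Q (y k)) (jobsLen σ.jobs) (σ.age + 1)]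
      gcongr
      refine (decValue_nil_le hdec hQ _ _).trans_eq ?_
      simp only [sum_mul_indicatorTest hQ]
    · simp only [jobsLen_feed]; exact le_rfl
    · simp only [jobsLen_feed]; exact le_rfl
  calc _ ≤ ∑ x, P x * (jobsValue P dec (indicatorTest F y) (feed dec σ.jobs x) *
        ∏ k ∈ F, if jobsLen σ.jobs ≤ k then Q (y k) else 1) := by
        gcongr with x
        exact hstep x
    _ ≤ _ := by
        simp only [← mul_assoc, ← Finset.sum_mul]
        unfold Machine.value
        gcongr
        exact sum_jobsValue_feed_le hP (fun n => (hdec n).cons) _ _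

lemma one_le_jobsValue (F : Finset ℕ) (y : ℕ → B) (l : List (ℕ × List A))
    (h : ∀ k ∈ F, k < jobsLen l → output dec l k = some (y k)) :
    1 ≤ jobsValue P dec (indicatorTest F y) l := by
  induction l with
  | nil => exact le_rfl
  | cons j l ih =>
    rw [jobsValue]
    refine one_le_mul (ih fun k hk hlt => ?_) ?_
    · have := h k hk (by rw [jobsLen]; omega)
      rwa [output, if_pos hlt] at this
    · have hout : ∀ i < j.1, jobsLen l + i ∈ F →
          (dec j.1 j.2).map (fun g => g i) = some (y (jobsLen l + i)) := by
        intro i hi hF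
        have := h _ hF (by rw [jobsLen]; omega)
        rwa [output, if_neg (by omega), if_pos (by omega), Nat.add_sub_cancel_left] at this
      unfold decValue
      split_ifs with htriv
      · exact le_rfl
      · push Not at htriv
        obtain ⟨i, hi, hne⟩ := htriv
        have hF : jobsLen l + i ∈ F := by
          by_contra hF
          exact hne (funext fun b => by simp [indicatorTest, hF])
        obtain ⟨g, hg, -⟩ := Option.map_eq_some_iff.1 (hout i hi hF)
        refine le_iSup_of_le 0 (le_of_eq ?_)
        rw [markovIter, hg, Option.elim_some, Finset.prod_eq_one]
        intro k hk
        unfold indicatorTest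
        dsimp only
        split_ifs with h1 h2
        · rfl
        · have := hout k (Finset.mem_range.1 hk) h1
          rw [hg] at this
          exact absurd (Option.some_injective _ this) h2
        · rfl

lemma Machine.one_le_value {F : Finset ℕ} {y : ℕ → B} {σ : Machine A}
    (h : ∀ k ∈ F, output dec σ.jobs k = some (y k)) : 1 ≤ σ.value P Q dec F y := by
  unfold Machine.value
  rw [Finset.prod_eq_one, mul_one]
  · exact one_le_jobsValue F y _ fun k hk _ => h k hk
  · intro k hk
    rw [if_neg (not_le.2 (lt_jobsLen_of_output dec (h k hk)))]

end Law

section LawMeasure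

variable {A B : Type*} [Fintype A] [Fintype B] [Nonempty A] [MeasurableSpace A]
  [DiscreteMeasurableSpace A] {p : A → ℝ} {q : B → ℝ} {μ : Measure (ℤ → A)}

lemma measure_output_le (hp : IsProbVector p) (hq : IsProbVector q)
    (hμ : IsBernoulliMeasure μ p) {dec : ℕ → List A → Option (ℕ → B)} {K : ℕ → ℝ≥0∞}
    (hdec : ∀ n, IsDecoder (fun a => ENNReal.ofReal (p a)) (fun b => ENNReal.ofReal (q b)) n
      (K n) (dec n)) (a : A) (r : ℕ) (F : Finset ℕ) (y : ℕ → B) (u : ℤ) (T : ℕ) :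
    μ {x | ∀ k ∈ F, output dec (Machine.start.run dec a r (seg x u T)).jobs k = some (y k)} ≤
      ∏ k ∈ F, ENNReal.ofReal (q (y k)) := by
  classical
  have hP : ∑ a, ENNReal.ofReal (p a) = 1 := by
    rw [← ENNReal.ofReal_sum_of_nonneg fun a _ => (hp.1 a).le, hp.2, ENNReal.ofReal_one]
  have hQ : ∑ b, ENNReal.ofReal (q b) = 1 := by
    rw [← ENNReal.ofReal_sum_of_nonneg fun a _ => (hq.1 a).le, hq.2, ENNReal.ofReal_one]
  have h := measure_foldl_seg (fun a => (hp.1 a).le) hμ (Machine.step dec a r)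
    (fun σ => ∀ k ∈ F, output dec σ.jobs k = some (y k)) u T Machine.start
  refine h.trans_le ?_
  refine (markovIter_mono (fun σ => ?_) T _).trans
    ((markovIter_le_of_superharmonic (Machine.sum_value_step_le hP hQ hdec F y) T _).trans_eq ?_)
  · split_ifs with hσ
    · exact Machine.one_le_value hσ
    · exact bot_le
  · simp [Machine.value, Machine.start, jobsValue, jobsLen]

end LawMeasure

section Code

variable {A B : Type*} {dec : ℕ → List A → Option (ℕ → B)} {a : A} {r : ℕ}

lemma Machine.jobsLen_le_run (σ : Machine A) (w : List A) :
    jobsLen σ.jobs ≤ jobsLen (σ.run dec a r w).jobs := by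
  induction w generalizing σ with
  | nil => exact le_rfl
  | cons x w ih =>
    refine le_trans ?_ (ih _)
    unfold Machine.step
    split_ifs <;> simp only [jobsLen, jobsLen_feed] <;> omega

lemma Machine.output_run_seg_of_le
    (hdec : ∀ n a w g, dec n w = some g → dec n (a :: w) = some g) {σ : Machine A} {x : ℤ → A}
    {u : ℤ} {m n k : ℕ} {b : B} (hmn : m ≤ n)
    (h : output dec (σ.run dec a r (seg x u m)).jobs k = some b) :
    output dec (σ.run dec a r (seg x u n)).jobs k = some b := by
  obtain ⟨t, rfl⟩ := Nat.exists_eq_add_of_le hmn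
  rw [seg_add, Machine.run_append]
  exact Machine.output_run hdec _ h

variable (dec a r) in
/-- A machine started at a marker at `s - k` has written `b` at position `s` after reading `n`
letters of `x`. -/
def Writes (x : ℤ → A) (s : ℤ) (b : B) (k n : ℕ) : Prop :=
  IsMarker a r x (s - k) ∧
    output dec (Machine.start.run dec a r (seg x (s - k) n)).jobs k = some b

lemma Writes.output_eq (hdec : ∀ n a w g, dec n w = some g → dec n (a :: w) = some g)
    {x : ℤ → A} {s u : ℤ} {b : B} {j k n T : ℕ} (h : Writes dec a r x s b k n)
    (hu : s - k = u + j) (hT : j + n ≤ T) :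
    output dec (Machine.start.run dec a r (seg x u T)).jobs (j + k) = some b := by
  refine Machine.output_run_seg_of_le hdec hT ?_
  unfold Writes at h
  rw [hu] at h
  rw [Machine.output_run_add h.1]
  exact h.2

lemma Writes.unique (hdec : ∀ n a w g, dec n w = some g → dec n (a :: w) = some g)
    {x : ℤ → A} {s : ℤ} {b c : B} {k l m n : ℕ} (hb : Writes dec a r x s b k m)
    (hc : Writes dec a r x s c l n) : b = c := by
  wlog hkl : l ≤ k generalizing b c k l m n
  · exact (this hc hb (by omega)).symm
  obtain ⟨j, rfl⟩ := Nat.exists_eq_add_of_le' hkl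
  have h1 := Machine.output_run_seg_of_le hdec (n := m + (j + n)) (by omega) hb.2
  have h2 := hc.output_eq hdec (u := s - (j + l : ℕ)) (j := j) (T := m + (j + n))
    (by push_cast; omega) (by omega)
  exact Option.some_injective _ (h1.symm.trans h2)

lemma writes_congr {x y : ℤ → A} {s : ℤ} {b : B} {k n : ℕ}
    (h : ∀ i, s - k - (r + 1) ≤ i → i ≤ s + n → y i = x i) (hx : Writes dec a r x s b k n) :
    Writes dec a r y s b k n := by
  refine ⟨fun i h1 h2 => (h i h1 (by omega)).trans (hx.1 i h1 h2), ?_⟩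
  rw [seg_congr fun i h1 h2 => h i (by omega) (by omega)]
  exact hx.2

lemma writes_shift {x : ℤ → A} {s : ℤ} {b : B} {k n : ℕ} :
    Writes dec a r (shift x) s b k n ↔ Writes dec a r x (s + 1) b k n := by
  unfold Writes IsMarker
  rw [seg_shift, show s - k + 1 = s + 1 - k by ring]
  refine and_congr_left fun _ => ⟨fun h i h1 h2 => ?_, fun h i h1 h2 => ?_⟩
  · have := h (i - 1) (by omega) (by omega)
    rwa [shift, sub_add_cancel] at this
  · exact h (i + 1) (by omega) (by omega)

variable (dec a r)

/-- The set of sequences for which every output letter is eventually written. -/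
def codeDomain : Set (ℤ → A) := {x | ∀ s, ∃ b k n, Writes dec a r x s b k n}

open Classical in
/-- The code: the letter written at `s` by any machine started at a marker. -/
def code [Nonempty B] (x : ℤ → A) (s : ℤ) : B :=
  if h : ∃ b k n, Writes dec a r x s b k n then h.choose else Classical.arbitrary B

variable {dec a r}

lemma code_eq [Nonempty B] (hdec : ∀ n a w g, dec n w = some g → dec n (a :: w) = some g)
    {x : ℤ → A} {s : ℤ} {b : B} {k n : ℕ} (h : Writes dec a r x s b k n) :
    code dec a r x s = b := by
  have hex : ∃ b k n, Writes dec a r x s b k n := ⟨b, k, n, h⟩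
  obtain ⟨l, m, h'⟩ := hex.choose_spec
  rw [code, dif_pos hex]
  exact h'.unique hdec h

lemma exists_writes_code [Nonempty B] {x : ℤ → A} {s : ℤ}
    (h : ∃ b k n, Writes dec a r x s b k n) :
    ∃ k n, Writes dec a r x s (code dec a r x s) k n := by
  rw [code, dif_pos h]
  exact h.choose_spec

lemma shift_preimage_codeDomain : shift ⁻¹' codeDomain dec a r = codeDomain dec a r := by
  ext x
  have h1 : x ∈ shift ⁻¹' codeDomain dec a r ↔ ∀ s, ∃ b k n, Writes dec a r (shift x) s b k n :=
    Iff.rfl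
  have h2 : x ∈ codeDomain dec a r ↔ ∀ s, ∃ b k n, Writes dec a r x s b k n := Iff.rfl
  rw [h1, h2]
  simp only [writes_shift]
  exact ⟨fun h s => by simpa using h (s - 1), fun h s => h (s + 1)⟩

lemma code_shift [Nonempty B] (hdec : ∀ n a w g, dec n w = some g → dec n (a :: w) = some g)
    {x : ℤ → A} (hx : x ∈ codeDomain dec a r) :
    code dec a r (shift x) = shift (code dec a r x) := by
  funext s
  obtain ⟨k, n, h⟩ := exists_writes_code (hx (s + 1))
  exact code_eq hdec (writes_shift.2 h)

lemma determinesAt_code [Nonempty B]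
    (hdec : ∀ n a w g, dec n w = some g → dec n (a :: w) = some g)
    {x : ℤ → A} (hx : x ∈ codeDomain dec a r) :
    ∃ m n : ℕ, DeterminesAt (codeDomain dec a r) (code dec a r) m n x := by
  obtain ⟨k, n, h⟩ := exists_writes_code (hx 0)
  refine ⟨k + (r + 1), n, fun y _ hy => code_eq hdec (writes_congr (fun i h1 h2 => ?_) h)⟩
  exact hy i (by push_cast; omega) (by omega)

end Code

section CodeMeasure

variable {A B : Type*} [Fintype A] [MeasurableSpace A] [DiscreteMeasurableSpace A]
  {dec : ℕ → List A → Option (ℕ → B)} {a : A} {r : ℕ}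

lemma measurableSet_writes (s : ℤ) (b : B) (k n : ℕ) :
    MeasurableSet {x | Writes dec a r x s b k n} := by
  refine MeasurableSet.inter (s₁ := {x | IsMarker a r x (s - k)}) ?_ (measurableSet_seg
    (fun w => output dec (Machine.start.run dec a r w).jobs k = some b) (s - k) n)
  refine measurableSet_setOfPred.2 (Measurable.forall fun i => ?_)
  refine Measurable.imp measurable_const (Measurable.imp measurable_const ?_)
  exact measurableSet_setOfPred.1 (measurableSet_eq_fun (measurable_pi_apply i) measurable_const)

lemma measurableSet_exists_writes (s : ℤ) (b : B) :
    MeasurableSet {x | ∃ k n, Writes dec a r x s b k n} :=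
  measurableSet_setOfPred.2 <| Measurable.exists fun k => Measurable.exists fun n =>
    measurableSet_setOfPred.1 (measurableSet_writes s b k n)

variable [Fintype B]

lemma measurableSet_codeDomain : MeasurableSet (codeDomain dec a r) :=
  measurableSet_setOfPred.2 <| Measurable.forall fun s => Measurable.exists fun b =>
    measurableSet_setOfPred.1 (measurableSet_exists_writes s b)

lemma measurable_code [Nonempty B] [MeasurableSpace B] [DiscreteMeasurableSpace B]
    (hdec : ∀ n a w g, dec n w = some g → dec n (a :: w) = some g) :
    Measurable (code dec a r) := by
  refine measurable_pi_iff.2 fun s => measurable_to_countable' fun b => ?_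
  have h : (fun x => code dec a r x s) ⁻¹' {b} = {x | (∃ k n, Writes dec a r x s b k n) ∨
      (¬ ∃ b k n, Writes dec a r x s b k n) ∧ Classical.arbitrary B = b} := by
    ext x
    have h1 : x ∈ (fun x => code dec a r x s) ⁻¹' {b} ↔ code dec a r x s = b := Iff.rfl
    rw [h1, Set.mem_ofPred_eq]
    constructor
    · rintro rfl
      by_cases hex : ∃ b k n, Writes dec a r x s b k n
      · exact Or.inl (exists_writes_code hex)
      · exact Or.inr ⟨hex, by rw [code, dif_neg hex]⟩
    · rintro (⟨k, n, h⟩ | ⟨hex, h⟩)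
      · exact code_eq hdec h
      · rwa [code, dif_neg hex]
  rw [h]
  have hm := fun b => measurableSet_setOfPred.1 (measurableSet_exists_writes (dec := dec) (a := a)
    (r := r) s b)
  exact measurableSet_setOfPred.2 ((hm b).or ((Measurable.exists hm).not.and measurable_const))

variable [Nonempty A] {p : A → ℝ} {q : B → ℝ} {μ : Measure (ℤ → A)}

lemma measure_codeDomain (hp : IsProbVector p) (hμ : IsBernoulliMeasure μ p)
    (hfin : ∀ (u : ℤ) (T : ℕ), ∀ᵐ x ∂μ, ∃ t ≥ T,
      ¬ ∃ j ∈ (Machine.start.run dec a r (seg x u t)).jobs, dec j.1 j.2 = none) :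
    μ (codeDomain dec a r) = 1 := by
  have := isProbabilityMeasure_of_bernoulli hμ
  refine (mem_ae_iff_prob_eq_one measurableSet_codeDomain).1 ?_
  filter_upwards [ae_all_iff.2 fun u => ae_all_iff.2 (hfin u),
    ae_all_iff.2 (ae_exists_isMarker_ge hp hμ a r),
    ae_all_iff.2 (ae_exists_isMarker_le hp hμ a r)] with x hx hge hle s
  obtain ⟨v, hvs, hv⟩ := hle s
  obtain ⟨v', hsv', hv'⟩ := hge (s + 1)
  obtain ⟨k, hk⟩ := Int.eq_ofNat_of_zero_le (sub_nonneg.2 hvs)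
  obtain ⟨n, hn⟩ := Int.eq_ofNat_of_zero_le (show 0 ≤ v' - v by omega)
  obtain rfl : v = s - k := by omega
  obtain rfl : v' = s - k + n := by omega
  obtain ⟨t, htn, ht⟩ := hx (s - k) n
  obtain ⟨m, rfl⟩ := Nat.exists_eq_add_of_le htn
  have hlen : k < jobsLen (Machine.start.run dec a r (seg x (s - k) (n + m))).jobs := by
    rw [seg_add, Machine.run_append]
    refine lt_of_lt_of_le ?_ (Machine.jobsLen_le_run _ _)
    rw [Machine.jobsLen_run_isMarker hv']
    omega
  obtain ⟨b, hb⟩ := exists_output dec hlen ht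
  exact ⟨b, k, n + m, hv, hb⟩

lemma measure_code_eq_le [Nonempty B] (hp : IsProbVector p) (hq : IsProbVector q)
    (hμ : IsBernoulliMeasure μ p) {K : ℕ → ℝ≥0∞}
    (hdec : ∀ n, IsDecoder (fun a => ENNReal.ofReal (p a)) (fun b => ENNReal.ofReal (q b)) n
      (K n) (dec n)) (hD : μ (codeDomain dec a r) = 1) (F : Finset ℤ) (y : ℤ → B) :
    μ {x | ∀ s ∈ F, code dec a r x s = y s} ≤ ∏ s ∈ F, ENNReal.ofReal (q (y s)) := by
  have := isProbabilityMeasure_of_bernoulli hμ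
  have hcons := fun n => (hdec n).cons
  obtain ⟨L, hL⟩ : ∃ L : ℕ, ∀ s ∈ F, |s| ≤ L :=
    ⟨∑ s ∈ F, s.natAbs, fun s hs => by
      rw [Int.abs_eq_natAbs]
      exact_mod_cast Finset.single_le_sum (f := Int.natAbs) (fun _ _ => Nat.zero_le _) hs⟩
  let G : ℕ → Set (ℤ → A) := fun N =>
    {x | ∀ s ∈ F, ∃ k ≤ N, ∃ n ≤ N, Writes dec a r x s (y s) k n}
  have hmono : Monotone G := fun M N hMN x hx s hs => by
    obtain ⟨k, hk, n, hn, h⟩ := hx s hs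
    exact ⟨k, hk.trans hMN, n, hn.trans hMN, h⟩
  have hsub : {x | ∀ s ∈ F, code dec a r x s = y s} ≤ᵐ[μ] ⋃ N, G N := by
    have hD' : codeDomain dec a r ∈ ae μ :=
      (mem_ae_iff_prob_eq_one measurableSet_codeDomain).2 hD
    filter_upwards [hD'] with x hx hxy
    have hw : ∀ s, ∃ k n, Writes dec a r x s (code dec a r x s) k n := fun s =>
      exists_writes_code (hx s)
    choose k n hkn using hw
    refine Set.mem_iUnion.2 ⟨∑ s ∈ F, (k s + n s), fun s hs => ?_⟩
    have hle := Finset.single_le_sum (f := fun s => k s + n s) (fun _ _ => Nat.zero_le _) hs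
    have hxys : code dec a r x s = y s := hxy s hs
    exact ⟨k s, by omega, n s, by omega, hxys ▸ hkn s⟩
  refine (measure_mono_ae hsub).trans ?_
  rw [hmono.measure_iUnion]
  refine iSup_le fun N => ?_
  have hinj : Set.InjOn (fun s : ℤ => (s + (N + L)).toNat) F := fun s hs t ht hst => by
    have h1 := abs_le.1 (hL s hs)
    have h2 := abs_le.1 (hL t ht)
    dsimp only at hst
    omega
  have hG : G N ⊆ {x | ∀ k ∈ F.image (fun s : ℤ => (s + (N + L)).toNat),
      output dec (Machine.start.run dec a r (seg x (-(N + L)) (2 * L + 2 * N))).jobs k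
        = some (y (k - (N + L)))} := by
    intro x hx k hk
    obtain ⟨s, hs, rfl⟩ := Finset.mem_image.1 hk
    obtain ⟨k, hk, n, hn, h⟩ := hx s hs
    have h1 := abs_le.1 (hL s hs)
    have h2 := h.output_eq hcons (u := -(N + L)) (j := (s + (N + L) - k).toNat)
      (T := 2 * L + 2 * N) (by omega) (by omega)
    rw [show (s + (N + L) - k).toNat + k = (s + (N + L)).toNat by omega] at h2
    rw [h2, show (((s + (N + L)).toNat : ℕ) : ℤ) - (N + L) = s by omega]
  refine (measure_mono hG).trans ?_
  refine (measure_output_le hp hq hμ hdec a r _ (fun k : ℕ => y (k - (N + L))) _ _).trans_eq ?_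
  rw [Finset.prod_image hinj]
  refine Finset.prod_congr rfl fun s hs => ?_
  have h1 := abs_le.1 (hL s hs)
  rw [show (((s + (N + L)).toNat : ℕ) : ℤ) - (N + L) = s by omega]

end CodeMeasure

section Pushforward

variable {B : Type*} [Fintype B] [MeasurableSpace B] [DiscreteMeasurableSpace B]

/-- A probability measure whose cylinder masses are bounded by those of a Bernoulli measure is
that Bernoulli measure. -/
lemma eq_of_measure_cylinder_le [Nonempty B] {q : B → ℝ} (hq : IsProbVector q)
    {ν κ : Measure (ℤ → B)} [IsProbabilityMeasure κ] (hν : IsBernoulliMeasure ν q)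
    (h : ∀ (F : Finset ℤ) (y : ℤ → B),
      κ {x | ∀ s ∈ F, x s = y s} ≤ ∏ s ∈ F, ENNReal.ofReal (q (y s))) : ν = κ := by
  have := isProbabilityMeasure_of_bernoulli hν
  refine IsProjectiveLimit.unique (P := fun I : Finset ℤ => ν.map I.restrict) (fun I => rfl)
    fun I => ?_
  have hm := Finset.measurable_restrict (X := fun _ : ℤ => B) I
  have := Measure.isProbabilityMeasure_map (μ := κ) hm.aemeasurable
  have := Measure.isProbabilityMeasure_map (μ := ν) hm.aemeasurable
  refine Measure.eq_of_le_of_measure_univ_eq ?_ (by simp)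
  have hsing : ∀ z : I → B, κ.map I.restrict {z} ≤ ν.map I.restrict {z} := by
    intro z
    classical
    let y : ℤ → B := fun s => if hs : s ∈ I then z ⟨s, hs⟩ else Classical.arbitrary B
    have hpre : (I.restrict (π := fun _ : ℤ => B)) ⁻¹' {z} = {x | ∀ s ∈ I, x s = y s} := by
      ext x
      refine ⟨fun hx s hs => ?_, fun hx => funext fun ⟨s, hs⟩ => ?_⟩
      · have := congrFun (show I.restrict x = z from hx) ⟨s, hs⟩
        simpa [y, hs] using this
      · simpa [y, hs] using hx s hs
    rw [Measure.map_apply hm (measurableSet_singleton z),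
      Measure.map_apply hm (measurableSet_singleton z), hpre, hν,
      ENNReal.ofReal_prod_of_nonneg fun s _ => (hq.1 _).le]
    exact h I y
  refine Measure.le_iff.2 fun s _ => ?_
  classical
  rw [← s.toFinite.coe_toFinset, ← sum_measure_singleton, ← sum_measure_singleton]
  exact Finset.sum_le_sum fun z _ => hsing z

end Pushforward

section ProbVector

variable {A : Type*} [Fintype A] {p : A → ℝ}

lemma nonempty_of_isProbVector (hp : IsProbVector p) : Nonempty A := by
  by_contra h
  rw [not_nonempty_iff] at h
  simpa using hp.2

lemma le_one_of_isProbVector (hp : IsProbVector p) (a : A) : p a ≤ 1 :=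
  hp.2 ▸ Finset.single_le_sum (fun i _ => (hp.1 i).le) (Finset.mem_univ a)

lemma vecEntropy_nonneg (hp : IsProbVector p) : 0 ≤ vecEntropy p :=
  neg_nonneg.2 <| Finset.sum_nonpos fun a _ => mul_nonpos_of_nonneg_of_nonpos (hp.1 a).le
    (Real.log_nonpos (hp.1 a).le (le_one_of_isProbVector hp a))

lemma exists_lt_one_of_vecEntropy_pos (hH : 0 < vecEntropy p) (hp : IsProbVector p) :
    ∃ a, p a < 1 := by
  by_contra! h
  refine hH.ne' ?_
  have h1 : ∀ a, p a = 1 := fun a => (le_one_of_isProbVector hp a).antisymm (h a)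
  simp [vecEntropy, h1]

end ProbVector

lemma exists_add_mul_pow_lt_one {ρ C c : ℝ≥0∞} (hρ : ρ < 1) (hC : C ≠ ∞) (hc : c < 1) :
    ∃ r : ℕ, ρ + C * c ^ (r + 1) < 1 := by
  have h : Tendsto (fun r : ℕ => ρ + C * c ^ (r + 1)) atTop (nhds (ρ + C * 0)) :=
    tendsto_const_nhds.add <| ENNReal.Tendsto.const_mul
      ((tendsto_add_atTop_iff_nat 1).2 (ENNReal.tendsto_pow_atTop_nhds_zero_of_lt_one hc))
      (Or.inr hC)
  rw [mul_zero, add_zero] at h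
  exact (h.eventually (gt_mem_nhds hρ)).exists

end FinitaryCoding

/-- **Keane–Smorodinsky (unequal entropies).** If `p` and `q` are strictly positive
probability vectors on finite alphabets with `H(p) > H(q)`, then there exists a finitary
homomorphism from `BS(p)` to `BS(q)`. -/
theorem finitary_factor_of_entropy_gt
    {A B : Type*} [Fintype A] [Fintype B]
    [MeasurableSpace A] [DiscreteMeasurableSpace A]
    [MeasurableSpace B] [DiscreteMeasurableSpace B]
    (p : A → ℝ) (q : B → ℝ) (hp : IsProbVector p) (hq : IsProbVector q)
    (μ : Measure (ℤ → A)) (ν : Measure (ℤ → B))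
    (hμ : IsBernoulliMeasure μ p) (hν : IsBernoulliMeasure ν q)
    (hH : vecEntropy q < vecEntropy p) :
    ∃ (D : Set (ℤ → A)) (φ : (ℤ → A) → (ℤ → B)),
      IsFactorMap μ ν D φ ∧ IsFinitary μ D φ := by
  have := FinitaryCoding.nonempty_of_isProbVector hp
  have := FinitaryCoding.nonempty_of_isProbVector hq
  have := FinitaryCoding.isProbabilityMeasure_of_bernoulli hμ
  obtain ⟨a, ha⟩ := FinitaryCoding.exists_lt_one_of_vecEntropy_pos
    ((FinitaryCoding.vecEntropy_nonneg hq).trans_lt hH) hp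
  obtain ⟨ρ, C, dec, -, hρ, hC, hdec⟩ := FinitaryCoding.exists_isDecoder hp hq hH
  obtain ⟨r, hr⟩ := FinitaryCoding.exists_add_mul_pow_lt_one
    (ENNReal.ofReal_lt_one.2 hρ) hC (ENNReal.ofReal_lt_one.2 ha)
  have hcons := fun n => (hdec n).cons
  have hD := FinitaryCoding.measure_codeDomain hp hμ <|
    FinitaryCoding.ae_exists_all_finished hp hμ ha hC hr fun n => (hdec n).time
  have hφ : Measurable (FinitaryCoding.code dec a r) := FinitaryCoding.measurable_code hcons
  have := Measure.isProbabilityMeasure_map (μ := μ) hφ.aemeasurable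
  refine ⟨FinitaryCoding.codeDomain dec a r, FinitaryCoding.code dec a r,
    { measurable_map := hφ
      dom_measurable := FinitaryCoding.measurableSet_codeDomain
      dom_shift_invariant := FinitaryCoding.shift_preimage_codeDomain
      dom_full := hD
      pushforward := FinitaryCoding.eq_of_measure_cylinder_le hq hν fun F y => ?_
      equivariant := fun x => FinitaryCoding.code_shift hcons },
    ae_of_all _ fun x => FinitaryCoding.determinesAt_code hcons⟩
  refine (Measure.map_apply hφ ?_).trans_le
    (FinitaryCoding.measure_code_eq_le hp hq hμ hdec hD F y)
  exact measurableSet_setOfPred.2 <| Measurable.forall fun s => Measurable.imp measurable_const <|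
    measurableSet_setOfPred.1 (measurableSet_eq_fun (measurable_pi_apply s) measurable_const)
end
end

section
/- Let (X, μ, S) and (Y, ν, T) be sequence spaces over finite alphabets with ergodic shift-invariant probability measures, and let φ be a finitary isomorphism from X to Y such that both φ and φ^{-1} have finite expected code lengths. Then the information cocycles I_S and I_T∘φ are cohomologous with a finite-valued measurable transfer function: there exists a measurable, almost everywhere finite real-valued function g on X such that I_S = I_T∘φ + g∘S − g holds μ-almost everywhere. -/
open MeasureTheory ENNReal Filter

noncomputable section

/-- The σ-algebra `α⁻` on `ℤ → A` generated by the coordinates `x_i`, `i ≥ 1`. -/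
def futureSigma (A : Type*) [MeasurableSpace A] : MeasurableSpace (ℤ → A) :=
  ⨆ i ∈ {i : ℤ | 1 ≤ i}, MeasurableSpace.comap (fun x : ℤ → A => x i) inferInstance

/-- The information cocycle `I_S = -∑_i χ_{A_i} log μ(A_i | α⁻)` of the shift on
`(ℤ → A, μ)`, where `A_i = {x : x₀ = i}` is the time-zero partition and `μ(A_i | α⁻)` is
the conditional probability of `A_i` given the coordinates `x_j`, `j ≥ 1`. -/
noncomputable def infoCocycle {A : Type*} [Fintype A] [MeasurableSpace A]
    (μ : Measure (ℤ → A)) : (ℤ → A) → ℝ := fun x =>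
  -∑ i : A,
    Set.indicator {y : ℤ → A | y 0 = i} (fun _ => (1 : ℝ)) x *
      Real.log ((μ[Set.indicator {y : ℤ → A | y 0 = i} (fun _ => (1 : ℝ))|futureSigma A]) x)

open ProbabilityTheory

section PointProb

lemma measurable_kernel_singleton {α γ : Type*} [MeasurableSpace α] [MeasurableSpace γ]
    [StandardBorelSpace α] (κ : Kernel γ α) [IsFiniteKernel κ] :
    Measurable fun p : γ × α => κ p.1 {p.2} := by
  have h : MeasurableSet {q : (γ × α) × α | q.2 = q.1.2} :=
    measurableSet_eq_fun (by fun_prop) (by fun_prop)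
  exact Kernel.measurable_kernel_prodMk_left (κ := κ.prodMkRight α) h

variable {Ω Ω' α β γ δ : Type*} [MeasurableSpace Ω] [MeasurableSpace Ω']
  [MeasurableSpace α] [MeasurableSpace β] [MeasurableSpace γ] [MeasurableSpace δ]
  [StandardBorelSpace α] [Nonempty α] [StandardBorelSpace β] [Nonempty β]
  {μ : Measure Ω} {μ' : Measure Ω'} [IsProbabilityMeasure μ] [IsProbabilityMeasure μ']

/-- The conditional probability, given the value of `W`, that `U` takes the value it does. -/
def pointProb (U : Ω → α) (W : Ω → γ) (μ : Measure Ω) [IsProbabilityMeasure μ] (ω : Ω) : ℝ≥0∞ :=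
  condDistrib U W μ (W ω) {U ω}

lemma pointProb_ne_top (U : Ω → α) (W : Ω → γ) (ω : Ω) : pointProb U W μ ω ≠ ∞ :=
  measure_ne_top _ _

lemma measurable_pointProb {U : Ω → α} {W : Ω → γ} (hU : Measurable U) (hW : Measurable W) :
    Measurable (pointProb U W μ) :=
  (measurable_kernel_singleton (condDistrib U W μ)).comp (hW.prodMk hU)

/-- `pointProb` only depends on the joint law, so it is carried along by measure preserving
maps. -/
lemma pointProb_comp_ae_eq {T : Ω' → Ω} (hT : MeasurePreserving T μ' μ)
    {U : Ω → α} {W : Ω → γ} (hU : Measurable U) (hW : Measurable W)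
    {U' : Ω' → α} {W' : Ω' → γ} (hUU : U' =ᵐ[μ'] U ∘ T) (hWW : W' =ᵐ[μ'] W ∘ T) :
    pointProb U' W' μ' =ᵐ[μ'] pointProb U W μ ∘ T := by
  have hc : condDistrib U' W' μ' = condDistrib U W μ := by
    rw [condDistrib_congr hUU hWW, condDistrib, condDistrib]
    congr 1
    rw [← hT.map_eq, Measure.map_map (hW.prodMk hU) hT.measurable]
    rfl
  filter_upwards [hUU, hWW] with ω h1 h2
  simp [pointProb, hc, h1, h2]

lemma pointProb_prod {U : Ω → α} {V : Ω → β} {W : Ω → γ}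
    (hU : Measurable U) (hV : Measurable V) (hW : Measurable W) :
    pointProb (fun ω => (U ω, V ω)) W μ =ᵐ[μ]
      fun ω => pointProb U W μ ω * pointProb V (fun ω => (W ω, U ω)) μ ω := by
  have hUV : Measurable fun ω => (U ω, V ω) := hU.prodMk hV
  have key : condDistrib (fun ω => (U ω, V ω)) W μ =ᵐ[μ.map W]
      condDistrib U W μ ⊗ₖ condDistrib V (fun ω => (W ω, U ω)) μ := by
    refine condDistrib_ae_eq_of_measure_eq_compProd W hUV.aemeasurable ?_
    rw [← Measure.compProd_assoc', compProd_map_condDistrib hU.aemeasurable,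
      compProd_map_condDistrib hV.aemeasurable, Measure.map_map (by fun_prop) (by fun_prop)]
    rfl
  filter_upwards [ae_of_ae_map hW.aemeasurable key] with ω hω
  have hs : (({(U ω, V ω)} : Set (α × β))) = {U ω} ×ˢ {V ω} := by simp
  simp only [pointProb, hω]
  rw [hs, Kernel.compProd_apply_prod (measurableSet_singleton _) (measurableSet_singleton _),
    lintegral_singleton, mul_comm]

lemma pointProb_comp_left {U : Ω → α} {W : Ω → γ} (hU : Measurable U) (hW : Measurable W)
    {f : α → β} (hf : Measurable f) (hinj : Function.Injective f) :
    pointProb (f ∘ U) W μ =ᵐ[μ] pointProb U W μ := by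
  filter_upwards [ae_of_ae_map hW.aemeasurable (condDistrib_comp W hU.aemeasurable hf)] with ω hω
  simp only [pointProb, hω]
  rw [Kernel.map_apply' _ hf _ (measurableSet_singleton _)]
  congr 1
  ext a
  simp [hinj.eq_iff]

lemma pointProb_comp_right {U : Ω → α} {W : Ω → γ} (hU : Measurable U) (hW : Measurable W)
    {f : γ → δ} (hf : Measurable f) {f' : δ → γ} (hf' : Measurable f')
    (hinv : Function.LeftInverse f' f) :
    pointProb U (f ∘ W) μ =ᵐ[μ] pointProb U W μ := by
  have key : condDistrib U W μ =ᵐ[μ.map W] (condDistrib U (f ∘ W) μ).comap f hf := by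
    refine condDistrib_ae_eq_of_measure_eq_compProd W hU.aemeasurable ?_
    ext s hs
    have hs' : MeasurableSet (Prod.map f' id ⁻¹' s : Set (δ × α)) := hs.preimage (by fun_prop)
    have h := congrArg (fun m : Measure (δ × α) => m (Prod.map f' id ⁻¹' s))
      (compProd_map_condDistrib (μ := μ) (X := f ∘ W) hU.aemeasurable)
    simp only [Measure.compProd_apply hs'] at h
    rw [Measure.map_apply (by fun_prop) hs', lintegral_map
      (Kernel.measurable_kernel_prodMk_left hs') (by fun_prop)] at h
    rw [Measure.compProd_apply hs, Measure.map_apply (by fun_prop) hs, lintegral_map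
      (Kernel.measurable_kernel_prodMk_left hs) hW]
    simpa [Set.preimage_preimage, hinv _, Kernel.comap_apply] using h.symm
  filter_upwards [ae_of_ae_map hW.aemeasurable key] with ω hω
  simp [pointProb, hω, Kernel.comap_apply]

/-- If `V` is almost surely one of countably many measurable functions of `W`, then the value
taken by `V` almost surely has positive conditional probability. -/
lemma pointProb_ne_zero {ι : Type*} [Countable ι] {V : Ω → β} {W : Ω → γ}
    (hV : Measurable V) (hW : Measurable W) {f : ι → γ → β} (hf : ∀ i, Measurable (f i))
    (h : ∀ᵐ ω ∂μ, ∃ i, V ω = f i (W ω)) :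
    ∀ᵐ ω ∂μ, pointProb V W μ ω ≠ 0 := by
  set κ := condDistrib V W μ
  have hnull : ∀ i, ∀ᵐ ω ∂μ, ¬ (V ω = f i (W ω) ∧ κ (W ω) {V ω} = 0) := by
    intro i
    have hs : MeasurableSet {p : γ × β | p.2 = f i p.1 ∧ κ p.1 {p.2} = 0} :=
      (measurableSet_eq_fun (by fun_prop) ((hf i).comp measurable_fst)).inter
        (measurable_kernel_singleton κ (measurableSet_singleton 0))
    have h0 : (μ.map fun ω => (W ω, V ω)) {p : γ × β | p.2 = f i p.1 ∧ κ p.1 {p.2} = 0} = 0 := by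
      rw [← compProd_map_condDistrib hV.aemeasurable, Measure.compProd_apply hs]
      refine (lintegral_congr fun w => ?_).trans lintegral_zero
      by_cases hw : κ w {f i w} = 0
      · refine measure_mono_null ?_ hw
        rintro v ⟨hv, -⟩
        exact hv
      · convert measure_empty (μ := κ w)
        ext v
        simp only [Set.mem_preimage, Set.mem_ofPred_eq, Set.mem_empty_iff_false, iff_false, not_and]
        rintro rfl
        exact hw
    rw [Measure.map_apply (by fun_prop) hs] at h0
    exact measure_eq_zero_iff_ae_notMem.1 h0
  filter_upwards [h, ae_all_iff.2 hnull] with ω ⟨i, hi⟩ hω h0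
  exact hω i ⟨hi, h0⟩

end PointProb

section SequencePair

variable {Ω A B : Type*} [MeasurableSpace Ω] [MeasurableSpace A] [MeasurableSpace B]

/-- Drop the first term of a one-sided sequence. -/
def seqTail {A : Type*} (x : ℕ → A) : ℕ → A := fun n => x (n + 1)

/-- Prepend a term to a one-sided sequence. -/
def seqCons {A : Type*} (p : A × (ℕ → A)) : ℕ → A := fun n => Nat.casesOn n p.1 p.2

lemma seqCons_seqTail {A : Type*} (x : ℕ → A) : seqCons (x 0, seqTail x) = x := by
  funext n
  cases n <;> rfl

lemma measurable_seqTail : Measurable (seqTail : (ℕ → A) → ℕ → A) :=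
  measurable_pi_lambda _ fun n => measurable_pi_apply (n + 1)

lemma measurable_seqCons : Measurable (seqCons : A × (ℕ → A) → ℕ → A) := by
  refine measurable_pi_lambda _ fun n => ?_
  cases n with
  | zero => exact measurable_fst
  | succ n => exact (measurable_pi_apply n).comp measurable_snd

variable [StandardBorelSpace A] [Nonempty A] [StandardBorelSpace B] [Nonempty B]
  {μ : Measure Ω} [IsProbabilityMeasure μ]

lemma pointProb_mul_pointProb_ae_eq {S : Ω → Ω} (hS : MeasurePreserving S μ μ)
    {X : Ω → ℕ → A} {Y : Ω → ℕ → B} (hX : Measurable X) (hY : Measurable Y)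
    (hXS : ∀ᵐ ω ∂μ, seqTail (X ω) = X (S ω)) (hYS : ∀ᵐ ω ∂μ, seqTail (Y ω) = Y (S ω)) :
    ∀ᵐ ω ∂μ, pointProb (fun ω => X ω 0) (fun ω => seqTail (X ω)) μ ω * pointProb Y X μ ω =
      pointProb Y X μ (S ω) * pointProb (fun ω => (X ω 0, Y ω 0))
        (fun ω => (seqTail (X ω), seqTail (Y ω))) μ ω := by
  have hX0 : Measurable fun ω => X ω 0 := (measurable_pi_apply 0).comp hX
  have hY0 : Measurable fun ω => Y ω 0 := (measurable_pi_apply 0).comp hY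
  have hX' : Measurable fun ω => seqTail (X ω) := measurable_seqTail.comp hX
  have hY' : Measurable fun ω => seqTail (Y ω) := measurable_seqTail.comp hY
  have h₁ := pointProb_prod (μ := μ) hX0 hY hX'
  have h₂ : pointProb Y (fun ω => (seqTail (X ω), X ω 0)) μ =ᵐ[μ] pointProb Y X μ := by
    refine pointProb_comp_right (f := fun x : ℕ → A => (seqTail x, x 0))
      (f' := fun p => seqCons p.swap) hY hX
      (measurable_seqTail.prodMk (measurable_pi_apply 0))
      (measurable_seqCons.comp measurable_swap) fun x => seqCons_seqTail x
  have h₃ := pointProb_prod (μ := μ) hY' (hX0.prodMk hY0) hX'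
  have h₄ : pointProb (fun ω => seqTail (Y ω)) (fun ω => seqTail (X ω)) μ =ᵐ[μ]
      pointProb Y X μ ∘ S := pointProb_comp_ae_eq hS hY hX hYS hXS
  have h₅ : pointProb (fun ω => (seqTail (Y ω), (X ω 0, Y ω 0))) (fun ω => seqTail (X ω)) μ
      =ᵐ[μ] pointProb (fun ω => (X ω 0, Y ω)) (fun ω => seqTail (X ω)) μ := by
    refine pointProb_comp_left (f := fun p : A × (ℕ → B) => (seqTail p.2, (p.1, p.2 0)))
      (hX0.prodMk hY) hX' ?_ ?_
    · exact (measurable_seqTail.comp measurable_snd).prodMk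
        (measurable_fst.prodMk ((measurable_pi_apply 0).comp measurable_snd))
    · rintro ⟨a, y⟩ ⟨a', y'⟩ h
      simp only [Prod.mk.injEq] at h
      rw [← seqCons_seqTail y, ← seqCons_seqTail y', h.1, h.2.1, h.2.2]
  filter_upwards [h₁, h₂, h₃, h₄, h₅] with ω e₁ e₂ e₃ e₄ e₅
  rw [← e₂, ← e₁, ← e₅, e₃, e₄, Function.comp_apply]

lemma pointProb_swap {α γ : Type*} [MeasurableSpace α] [MeasurableSpace γ]
    {U : Ω → A} {V : Ω → B} {W : Ω → α} {Z : Ω → γ}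
    (hU : Measurable U) (hV : Measurable V) (hW : Measurable W) (hZ : Measurable Z) :
    pointProb (fun ω => (V ω, U ω)) (fun ω => (Z ω, W ω)) μ =ᵐ[μ]
      pointProb (fun ω => (U ω, V ω)) (fun ω => (W ω, Z ω)) μ :=
  (pointProb_comp_left (f := Prod.swap) (hU.prodMk hV) (hZ.prodMk hW) measurable_swap
    Prod.swap_injective).trans
    (pointProb_comp_right (f := Prod.swap) (f' := Prod.swap) (hU.prodMk hV) (hW.prodMk hZ)
      measurable_swap measurable_swap Prod.swap_leftInverse)

/-- The information functions of two processes over the same system are cohomologous as soon as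
the futures of the two processes have almost surely positive conditional probability given each
other. -/
lemma neg_log_pointProb_cohomologous [Countable A] [Countable B]
    {S : Ω → Ω} (hS : MeasurePreserving S μ μ)
    {X : Ω → ℕ → A} {Y : Ω → ℕ → B} (hX : Measurable X) (hY : Measurable Y)
    (hXS : ∀ᵐ ω ∂μ, seqTail (X ω) = X (S ω)) (hYS : ∀ᵐ ω ∂μ, seqTail (Y ω) = Y (S ω))
    (hYX : ∀ᵐ ω ∂μ, pointProb Y X μ ω ≠ 0) (hXY : ∀ᵐ ω ∂μ, pointProb X Y μ ω ≠ 0) :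
    ∃ g : Ω → ℝ, Measurable g ∧ ∀ᵐ ω ∂μ,
      -Real.log (pointProb (fun ω => X ω 0) (fun ω => seqTail (X ω)) μ ω).toReal =
        -Real.log (pointProb (fun ω => Y ω 0) (fun ω => seqTail (Y ω)) μ ω).toReal
          + g (S ω) - g ω := by
  have hX0 : Measurable fun ω => X ω 0 := (measurable_pi_apply 0).comp hX
  have hY0 : Measurable fun ω => Y ω 0 := (measurable_pi_apply 0).comp hY
  have hX' : Measurable fun ω => seqTail (X ω) := measurable_seqTail.comp hX
  have hY' : Measurable fun ω => seqTail (Y ω) := measurable_seqTail.comp hY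
  refine ⟨fun ω => Real.log (pointProb X Y μ ω).toReal - Real.log (pointProb Y X μ ω).toReal,
    (measurable_pointProb hX hY).ennreal_toReal.log.sub
      (measurable_pointProb hY hX).ennreal_toReal.log, ?_⟩
  have hx := pointProb_ne_zero (μ := μ) hX0 hX' (f := fun (a : A) _ => a)
    (fun _ => measurable_const) (ae_of_all _ fun ω => ⟨_, rfl⟩)
  have hy := pointProb_ne_zero (μ := μ) hY0 hY' (f := fun (b : B) _ => b)
    (fun _ => measurable_const) (ae_of_all _ fun ω => ⟨_, rfl⟩)
  filter_upwards [pointProb_mul_pointProb_ae_eq hS hX hY hXS hYS,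
    pointProb_mul_pointProb_ae_eq hS hY hX hYS hXS, pointProb_swap hX0 hY0 hX' hY', hx, hy,
    hYX, hXY, hS.quasiMeasurePreserving.ae hYX, hS.quasiMeasurePreserving.ae hXY]
    with ω e₁ e₂ e₃ n₁ n₂ n₃ n₄ n₅ n₆
  have pos : ∀ {p : ℝ≥0∞}, p ≠ ∞ → p ≠ 0 → p.toReal ≠ 0 := fun h h' =>
    (ENNReal.toReal_pos h' h).ne'
  rw [e₃] at e₂
  have hR : pointProb (fun ω => (X ω 0, Y ω 0))
      (fun ω => (seqTail (X ω), seqTail (Y ω))) μ ω ≠ 0 := by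
    intro h0
    rw [h0, mul_zero] at e₁
    exact mul_ne_zero n₁ n₃ e₁
  apply_fun fun p => Real.log p.toReal at e₁ e₂
  simp only [ENNReal.toReal_mul] at e₁ e₂
  rw [Real.log_mul (pos (pointProb_ne_top _ _ _) n₁) (pos (pointProb_ne_top _ _ _) n₃),
    Real.log_mul (pos (pointProb_ne_top _ _ _) n₅) (pos (pointProb_ne_top _ _ _) hR)] at e₁
  rw [Real.log_mul (pos (pointProb_ne_top _ _ _) n₂) (pos (pointProb_ne_top _ _ _) n₄),
    Real.log_mul (pos (pointProb_ne_top _ _ _) n₆) (pos (pointProb_ne_top _ _ _) hR)] at e₂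
  linarith

end SequencePair

section InfoCocycle

variable {A : Type*} [MeasurableSpace A]

/-- The one-sided future of a bi-infinite sequence, the present included. -/
def futureSeq {A : Type*} (x : ℤ → A) : ℕ → A := fun n => x n

lemma seqTail_futureSeq {A : Type*} (x : ℤ → A) :
    seqTail (futureSeq x) = futureSeq (shift x) := by
  funext n
  simp [seqTail, futureSeq, shift]

lemma measurable_futureSeq : Measurable (futureSeq : (ℤ → A) → ℕ → A) :=
  measurable_pi_lambda _ fun n => measurable_pi_apply (n : ℤ)

lemma futureSigma_eq_comap :
    futureSigma A = MeasurableSpace.comap (fun x : ℤ → A => seqTail (futureSeq x)) inferInstance := by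
  apply le_antisymm
  · refine iSup₂_le fun i hi => ?_
    obtain ⟨n, rfl⟩ : ∃ n : ℕ, i = n + 1 := ⟨(i - 1).toNat, by
      have : (1 : ℤ) ≤ i := hi
      omega⟩
    rintro s ⟨t, ht, rfl⟩
    refine ⟨(fun w : ℕ → A => w n) ⁻¹' t, measurable_pi_apply n ht, ?_⟩
    ext x
    simp [seqTail, futureSeq]
  · rw [← measurable_iff_comap_le]
    refine @measurable_pi_lambda _ _ _ (futureSigma A) _ _ fun n => ?_
    rw [measurable_iff_comap_le]
    have h1 : ((n + 1 : ℕ) : ℤ) ∈ {i : ℤ | 1 ≤ i} := by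
      simp
    exact le_iSup₂_of_le (f := fun (i : ℤ) (_ : i ∈ {i : ℤ | 1 ≤ i}) =>
      MeasurableSpace.comap (fun x : ℤ → A => x i) inferInstance) _ h1 le_rfl

lemma infoCocycle_ae_eq [Fintype A] [Nonempty A] [DiscreteMeasurableSpace A]
    (μ : Measure (ℤ → A)) [IsProbabilityMeasure μ] :
    infoCocycle μ =ᵐ[μ] fun x => -Real.log
      (pointProb (fun x => futureSeq x 0) (fun x => seqTail (futureSeq x)) μ x).toReal := by
  have h : ∀ a : A, (fun x => (condDistrib (fun x : ℤ → A => futureSeq x 0)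
      (fun x => seqTail (futureSeq x)) μ (seqTail (futureSeq x))).real {a}) =ᵐ[μ]
      μ[Set.indicator {y : ℤ → A | y 0 = a} (fun _ => (1 : ℝ))|futureSigma A] := by
    intro a
    rw [futureSigma_eq_comap]
    exact condDistrib_ae_eq_condExp (measurable_seqTail.comp measurable_futureSeq)
      ((measurable_pi_apply 0).comp measurable_futureSeq) (measurableSet_singleton a)
  filter_upwards [ae_all_iff.2 h] with x hx
  rw [infoCocycle, Finset.sum_eq_single (x 0), ← hx (x 0)]
  · simp [pointProb, futureSeq, Measure.real]
  · intro a _ ha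
    simp [ha.symm]
  · simp

end InfoCocycle

section Coding

variable {A B : Type*} {D : Set (ℤ → A)} {φ : (ℤ → A) → ℤ → B}

lemma DeterminesAt.mono {q q' r r' : ℕ} {x : ℤ → A} (h : DeterminesAt D φ q r x)
    (hq : q ≤ q') (hr : r ≤ r') : DeterminesAt D φ q' r' x :=
  fun y hy hyx => h y hy fun i h1 h2 => hyx i (by omega) (by omega)

lemma DeterminesAt.congr {q r : ℕ} {x y : ℤ → A} (h : DeterminesAt D φ q r x) (hy : y ∈ D)
    (hyx : ∀ i : ℤ, -(q : ℤ) ≤ i → i ≤ r → y i = x i) : DeterminesAt D φ q r y := by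
  intro z hz hzy
  rw [h y hy hyx]
  exact h z hz fun i h1 h2 => (hzy i h1 h2).trans (hyx i h1 h2)

/-- `z` agrees with a point of `D` on a window starting at `-q` which forces the zero output
coordinate to be `b`. -/
def WindowForces (D : Set (ℤ → A)) (φ : (ℤ → A) → ℤ → B) (q : ℕ) (b : B) (z : ℤ → A) : Prop :=
  ∃ r : ℕ, ∃ x ∈ D, DeterminesAt D φ q r x ∧ φ x 0 = b ∧
    ∀ i : ℤ, -(q : ℤ) ≤ i → i ≤ r → z i = x i

lemma WindowForces.unique {q : ℕ} {b b' : B} {z : ℤ → A}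
    (h : WindowForces D φ q b z) (h' : WindowForces D φ q b' z) : b = b' := by
  obtain ⟨r, x, hxD, hx, rfl, hzx⟩ := h
  obtain ⟨r', x', hxD', hx', rfl, hzx'⟩ := h'
  rcases le_total r r' with hr | hr
  · exact (hx x' hxD' fun i h1 h2 => (hzx' i h1 (by omega)).symm.trans (hzx i h1 h2)).symm
  · exact hx' x hxD fun i h1 h2 => (hzx i h1 (by omega)).symm.trans (hzx' i h1 h2)

lemma exists_windowForces_iff {q : ℕ} {x : ℤ → A} (hx : x ∈ D) :
    (∃ b, WindowForces D φ q b x) ↔ ∃ r, DeterminesAt D φ q r x := by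
  constructor
  · rintro ⟨b, r, y, -, hy, -, hxy⟩
    exact ⟨r, hy.congr hx hxy⟩
  · rintro ⟨r, hr⟩
    exact ⟨φ x 0, r, x, hx, hr, rfl, fun _ _ _ => rfl⟩

lemma tsum_indicator_le_codeLength (x : ℤ → A) :
    ∑' n : ℕ, Set.indicator {x | ¬ ∃ r, DeterminesAt D φ n r x} (fun _ => (1 : ℝ≥0∞)) x ≤
      codeLength D φ x := by
  refine le_iInf fun q => le_iInf fun r => le_iInf fun h => le_trans ?_ le_self_add
  rw [tsum_eq_sum (s := Finset.range q)]
  · refine (Finset.sum_le_sum fun n _ =>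
      Set.indicator_le_self' (fun _ _ => zero_le) x).trans ?_
    simp
  · intro n hn
    rw [Finset.mem_range, not_lt] at hn
    exact Set.indicator_of_notMem (not_not.2 ⟨r, h.mono hn le_rfl⟩) _

/-- The output symbol forced by the window of `z` starting at `-q`, if there is one. -/
def forcedSymbol [Nonempty B] (D : Set (ℤ → A)) (φ : (ℤ → A) → ℤ → B) (q : ℕ) (z : ℤ → A) : B :=
  Classical.epsilon fun b => WindowForces D φ q b z

lemma WindowForces.forcedSymbol_eq [Nonempty B] {q : ℕ} {b : B} {z : ℤ → A}
    (h : WindowForces D φ q b z) : forcedSymbol D φ q z = b :=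
  (Classical.epsilon_spec (p := fun b => WindowForces D φ q b z) ⟨b, h⟩).unique h

section Measurability

variable [Finite A] [MeasurableSpace A] [DiscreteMeasurableSpace A]

lemma measurableSet_of_window (q r : ℕ) {s : Set (ℤ → A)}
    (h : ∀ z ∈ s, ∀ z', (∀ i : ℤ, -(q : ℤ) ≤ i → i ≤ r → z' i = z i) → z' ∈ s) :
    MeasurableSet s := by
  let ρ : (ℤ → A) → (Finset.Icc (-(q : ℤ)) r → A) := fun z i => z i
  have hρ : Measurable ρ := measurable_pi_lambda _ fun i => measurable_pi_apply (i : ℤ)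
  have : s = ρ ⁻¹' (ρ '' s) := by
    refine (Set.subset_preimage_image ρ s).antisymm ?_
    rintro z ⟨z', hz', hzz⟩
    exact h z' hz' z fun i h1 h2 =>
      (congrFun hzz ⟨i, Finset.mem_Icc.2 ⟨h1, h2⟩⟩).symm
  rw [this]
  exact hρ (MeasurableSet.of_discrete)

lemma measurableSet_windowForces (q : ℕ) (b : B) : MeasurableSet {z | WindowForces D φ q b z} := by
  have : {z | WindowForces D φ q b z} = ⋃ r : ℕ, {z | ∃ x ∈ D, DeterminesAt D φ q r x ∧ φ x 0 = b ∧
    ∀ i : ℤ, -(q : ℤ) ≤ i → i ≤ r → z i = x i} := by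
    ext z
    simp [WindowForces]
  rw [this]
  refine MeasurableSet.iUnion fun r => measurableSet_of_window q r ?_
  rintro z ⟨x, hxD, hx, hb, hzx⟩ z' hz'
  exact ⟨x, hxD, hx, hb, fun i h1 h2 => (hz' i h1 h2).trans (hzx i h1 h2)⟩

lemma measurable_forcedSymbol [Nonempty B] [Countable B] [MeasurableSpace B] (q : ℕ) :
    Measurable (forcedSymbol D φ q) := by
  refine measurable_to_countable' fun b => ?_
  have : forcedSymbol D φ q ⁻¹' {b} = {z | WindowForces D φ q b z} ∪
      ((⋃ b', {z | WindowForces D φ q b' z})ᶜ ∩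
        {_z | Classical.epsilon (fun _ : B => False) = b}) := by
    ext z
    simp only [Set.mem_preimage, Set.mem_singleton_iff, Set.mem_union, Set.mem_inter_iff,
      Set.mem_compl_iff, Set.mem_iUnion, Set.mem_ofPred_eq]
    by_cases h : ∃ b', WindowForces D φ q b' z
    · obtain ⟨b', hb'⟩ := h
      rw [hb'.forcedSymbol_eq]
      constructor
      · rintro rfl
        exact Or.inl hb'
      · rintro (hb | ⟨hn, -⟩)
        · exact hb'.unique hb
        · exact absurd ⟨b', hb'⟩ hn
    · have h' : forcedSymbol D φ q z = Classical.epsilon fun _ => False :=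
        congrArg Classical.epsilon (funext fun b' => eq_false fun hb' => h ⟨b', hb'⟩)
      rw [h']
      constructor
      · exact fun hb => Or.inr ⟨h, hb⟩
      · rintro (hb | ⟨-, hb⟩)
        · exact absurd ⟨b, hb⟩ h
        · exact hb
  rw [this]
  exact (measurableSet_windowForces q b).union
    ((MeasurableSet.iUnion fun b' => measurableSet_windowForces q b').compl.inter
      (MeasurableSet.const _))

end Measurability

/-- Extend the one-sided sequence `w` to the left by the letters of `c`, where the `k`-th letter
of `c` is put at position `-k`. -/
def glueLeft [Nonempty A] (c : List A) (w : ℕ → A) : ℤ → A := fun i =>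
  if 0 ≤ i then w i.toNat else c.getD (-i).toNat (Classical.arbitrary A)

lemma measurable_glueLeft [Nonempty A] [MeasurableSpace A] (c : List A) :
    Measurable (glueLeft c) := by
  refine measurable_pi_lambda _ fun i => ?_
  by_cases h : 0 ≤ i
  · simpa [glueLeft, h] using measurable_pi_apply i.toNat
  · simp [glueLeft, h]

lemma exists_glueLeft_eq [Nonempty A] (x : ℤ → A) (m : ℕ) :
    ∃ c : List A, ∀ i : ℤ, -(m : ℤ) ≤ i → glueLeft c (futureSeq x) i = x i := by
  refine ⟨(List.range (m + 1)).map fun k : ℕ => x (-(k : ℤ)), fun i hi => ?_⟩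
  by_cases h : 0 ≤ i
  · simp [glueLeft, futureSeq, h]
  · have h1 : (-i).toNat < m + 1 := by omega
    have h2 : ((-i).toNat : ℤ) = -i := by omega
    simp [glueLeft, h, List.getD_eq_getElem?_getD, h1, h2]

lemma iterate_shift_apply (x : ℤ → A) (n : ℕ) (i : ℤ) : shift^[n] x i = x (i + n) := by
  induction n generalizing x with
  | zero => simp
  | succ n ih =>
    rw [Function.iterate_succ_apply, ih, shift]
    push_cast
    ring_nf

variable [MeasurableSpace A] [MeasurableSpace B]
  {μ : Measure (ℤ → A)} {ν : Measure (ℤ → B)}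

lemma IsFactorMap.iterate_shift_mem (hφ : IsFactorMap μ ν D φ) {x : ℤ → A} (hx : x ∈ D) (n : ℕ) :
    shift^[n] x ∈ D := by
  induction n with
  | zero => exact hx
  | succ n ih =>
    rw [Function.iterate_succ_apply']
    rw [← hφ.dom_shift_invariant] at ih
    exact ih

lemma IsFactorMap.map_iterate_shift (hφ : IsFactorMap μ ν D φ) {x : ℤ → A} (hx : x ∈ D) (n : ℕ) :
    φ (shift^[n] x) 0 = φ x n := by
  have : φ (shift^[n] x) = shift^[n] (φ x) := by
    induction n with
    | zero => rfl
    | succ n ih =>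
      rw [Function.iterate_succ_apply', hφ.equivariant _ (hφ.iterate_shift_mem hx n), ih,
        Function.iterate_succ_apply']
  rw [this, iterate_shift_apply, zero_add]

/-- If every nonnegative output coordinate only looks `m` steps into the past of the origin, the
future of the output is one of countably many measurable functions of the future of the input. -/
lemma IsFactorMap.exists_futureSeq_eq [Nonempty A] [Nonempty B] (hφ : IsFactorMap μ ν D φ)
    {x : ℤ → A} (hx : x ∈ D) {m : ℕ} (hm : ∀ n, ∃ r, DeterminesAt D φ (m + n) r (shift^[n] x)) :
    ∃ c : List A, futureSeq (φ x) = fun n =>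
      forcedSymbol D φ (m + n) (shift^[n] (glueLeft c (futureSeq x))) := by
  obtain ⟨c, hc⟩ := exists_glueLeft_eq x m
  refine ⟨c, funext fun n => ?_⟩
  obtain ⟨r, hr⟩ := hm n
  refine (WindowForces.forcedSymbol_eq ⟨r, shift^[n] x, hφ.iterate_shift_mem hx n, hr,
    hφ.map_iterate_shift hx n, fun i h1 h2 => ?_⟩).symm
  rw [iterate_shift_apply, iterate_shift_apply, hc _ (by push_cast at h1; omega)]

lemma IsFactorMap.ae_mem_dom [IsProbabilityMeasure μ] (hφ : IsFactorMap μ ν D φ) :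
    ∀ᵐ x ∂μ, x ∈ D :=
  (mem_ae_iff_prob_eq_one hφ.dom_measurable).2 hφ.dom_full

/-- With finite expected code length, almost surely the nonnegative output coordinates only look
a bounded number of steps into the past of the origin. -/
lemma ae_exists_determinesAt [Finite A] [DiscreteMeasurableSpace A] [Countable B]
    [IsProbabilityMeasure μ] (hμ : MeasurePreserving shift μ μ) (hφ : IsFactorMap μ ν D φ)
    (hfin : IsFinitary μ D φ) (hC : ∫⁻ x, codeLength D φ x ∂μ < ⊤) :
    ∀ᵐ x ∂μ, ∃ m, ∀ n, ∃ r, DeterminesAt D φ (m + n) r (shift^[n] x) := by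
  have hD := hφ.ae_mem_dom
  let bad : ℕ → Set (ℤ → A) := fun n => {x | ¬ ∃ b, WindowForces D φ n b x}
  have hbad : ∀ n, MeasurableSet (bad n) := fun n => by
    have : bad n = (⋃ b, {x | WindowForces D φ n b x})ᶜ := by
      ext x
      simp [bad]
    rw [this]
    exact (MeasurableSet.iUnion fun b => measurableSet_windowForces n b).compl
  have hsum : ∑' n, μ (shift^[n] ⁻¹' bad n) ≠ ∞ := by
    refine ne_top_of_le_ne_top hC.ne ?_
    calc ∑' n, μ (shift^[n] ⁻¹' bad n) = ∑' n, ∫⁻ x, (bad n).indicator (fun _ => 1) x ∂μ := by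
          refine tsum_congr fun n => ?_
          rw [(hμ.iterate n).measure_preimage (hbad n).nullMeasurableSet,
            lintegral_indicator_const (hbad n), one_mul]
      _ = ∫⁻ x, ∑' n, (bad n).indicator (fun _ => 1) x ∂μ :=
          (lintegral_tsum fun n => (measurable_const.indicator (hbad n)).aemeasurable).symm
      _ ≤ ∫⁻ x, codeLength D φ x ∂μ := by
          refine lintegral_mono_ae ?_
          filter_upwards [hD] with x hx
          refine le_trans (le_of_eq (tsum_congr fun n => ?_)) (tsum_indicator_le_codeLength x)
          classical
          simp only [Set.indicator_apply, bad, Set.mem_ofPred_eq, exists_windowForces_iff hx]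
  have hfin' : ∀ n : ℕ, ∀ᵐ x ∂μ, shift^[n] x ∈ D → ∃ q r : ℕ, DeterminesAt D φ q r (shift^[n] x) :=
    fun n => (hμ.iterate n).quasiMeasurePreserving.ae hfin
  filter_upwards [hD, ae_eventually_notMem hsum, ae_all_iff.2 hfin'] with x hx hev hfx
  have hxn : ∀ n : ℕ, ∃ q r : ℕ, DeterminesAt D φ q r (shift^[n] x) := fun n =>
    hfx n (hφ.iterate_shift_mem hx n)
  choose q r hqr using hxn
  obtain ⟨N, hN⟩ := eventually_atTop.1 hev
  refine ⟨(Finset.range N).sup q, fun n => ?_⟩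
  rcases lt_or_ge n N with hn | hn
  · exact ⟨r n, (hqr n).mono ((Finset.le_sup (f := q) (Finset.mem_range.2 hn)).trans
      (Nat.le_add_right _ _)) le_rfl⟩
  · have h := hN n hn
    simp only [bad, Set.mem_preimage, Set.mem_ofPred_eq, not_not] at h
    obtain ⟨r', hr'⟩ := (exists_windowForces_iff (hφ.iterate_shift_mem hx n)).1 h
    exact ⟨r', hr'.mono (Nat.le_add_left _ _) le_rfl⟩

lemma pointProb_futureSeq_ne_zero [Finite A] [DiscreteMeasurableSpace A] [Nonempty A]
    [Countable B] [DiscreteMeasurableSpace B] [Nonempty B]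
    [IsProbabilityMeasure μ] (hμ : MeasurePreserving shift μ μ) (hφ : IsFactorMap μ ν D φ)
    (hfin : IsFinitary μ D φ) (hC : ∫⁻ x, codeLength D φ x ∂μ < ⊤) :
    ∀ᵐ x ∂μ, pointProb (fun x => futureSeq (φ x)) futureSeq μ x ≠ 0 := by
  refine pointProb_ne_zero (measurable_futureSeq.comp hφ.measurable_map) measurable_futureSeq
    (f := fun (i : ℕ × List A) w n =>
      forcedSymbol D φ (i.1 + n) (shift^[n] (glueLeft i.2 w))) (fun i => ?_) ?_
  · exact measurable_pi_lambda _ fun n => (measurable_forcedSymbol _).comp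
      ((hμ.measurable.iterate n).comp (measurable_glueLeft i.2))
  · filter_upwards [hφ.ae_mem_dom, ae_exists_determinesAt hμ hφ hfin hC] with x hx ⟨m, hm⟩
    obtain ⟨c, hc⟩ := hφ.exists_futureSeq_eq hx hm
    exact ⟨(m, c), hc⟩

end Coding

/-- **Parry.** If `φ` is a finitary isomorphism between ergodic finite-state shift systems
such that both `φ` and `φ⁻¹` have finite expected code lengths, then the information
cocycles `I_S` and `I_T ∘ φ` are cohomologous with a finite-valued measurable transfer
function: `I_S = I_T ∘ φ + g ∘ S - g` almost everywhere. -/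
theorem info_cocycles_cohomologous_of_fect
    {A B : Type*} [Fintype A] [Fintype B]
    [MeasurableSpace A] [DiscreteMeasurableSpace A]
    [MeasurableSpace B] [DiscreteMeasurableSpace B]
    (μ : Measure (ℤ → A)) (ν : Measure (ℤ → B))
    [IsProbabilityMeasure μ] [IsProbabilityMeasure ν]
    (hμerg : Ergodic shift μ) (hνerg : Ergodic shift ν)
    (D : Set (ℤ → A)) (E : Set (ℤ → B))
    (φ : (ℤ → A) → (ℤ → B)) (ψ : (ℤ → B) → (ℤ → A))
    (hiso : IsFinitaryIsomorphism μ ν D E φ ψ)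
    (hCφ : (∫⁻ x, codeLength D φ x ∂μ) < ⊤)
    (hCψ : (∫⁻ y, codeLength E ψ y ∂ν) < ⊤) :
    ∃ g : (ℤ → A) → ℝ, Measurable g ∧
      ∀ᵐ x ∂μ, infoCocycle μ x = infoCocycle ν (φ x) + g (shift x) - g x := by
  obtain ⟨hφ, hψ, hfφ, hfψ, hDE, -⟩ := hiso
  have : Nonempty A := (nonempty_of_isProbabilityMeasure μ).map fun x => x 0
  have : Nonempty B := (nonempty_of_isProbabilityMeasure ν).map fun y => y 0
  have hφμ : MeasurePreserving φ μ ν := ⟨hφ.measurable_map, hφ.pushforward.symm⟩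
  have hS := hμerg.toMeasurePreserving
  have hX : Measurable (futureSeq : (ℤ → A) → ℕ → A) := measurable_futureSeq
  have hYν : Measurable (futureSeq : (ℤ → B) → ℕ → B) := measurable_futureSeq
  have hY : Measurable fun x => futureSeq (φ x) := hYν.comp hφ.measurable_map
  have hYX := pointProb_futureSeq_ne_zero hS hφ hfφ hCφ
  have hXY : ∀ᵐ x ∂μ, pointProb futureSeq (fun x => futureSeq (φ x)) μ x ≠ 0 := by
    have hpull := pointProb_comp_ae_eq hφμ (hX.comp hψ.measurable_map) hYν
      (U' := futureSeq) (W' := fun x => futureSeq (φ x))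
      (by filter_upwards [hφ.ae_mem_dom] with x hx
          simp [(hDE x hx).2]) (ae_of_all _ fun _ => rfl)
    filter_upwards [hpull, hφμ.quasiMeasurePreserving.ae
      (pointProb_futureSeq_ne_zero hνerg.toMeasurePreserving hψ hfψ hCψ)] with x e hx
    rw [e]
    exact hx
  have hYS : ∀ᵐ x ∂μ, seqTail (futureSeq (φ x)) = futureSeq (φ (shift x)) := by
    filter_upwards [hφ.ae_mem_dom] with x hx
    rw [seqTail_futureSeq, hφ.equivariant x hx]
  obtain ⟨g, hg, hcoh⟩ := neg_log_pointProb_cohomologous hS hX hY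
    (ae_of_all _ seqTail_futureSeq) hYS hYX hXY
  refine ⟨g, hg, ?_⟩
  have hpull := pointProb_comp_ae_eq hφμ ((measurable_pi_apply 0).comp hYν)
    (measurable_seqTail.comp hYν) (U' := fun x => futureSeq (φ x) 0)
    (W' := fun x => seqTail (futureSeq (φ x))) (ae_of_all _ fun _ => rfl) (ae_of_all _ fun _ => rfl)
  filter_upwards [hcoh, hpull, infoCocycle_ae_eq μ,
    hφμ.quasiMeasurePreserving.ae (infoCocycle_ae_eq ν)] with x e₁ e₂ e₃ e₄
  rw [e₃, e₄, e₁, e₂]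
  rfl
end
end

section
/- If the Bernoulli schemes BS(p) and BS(q) (p, q strictly positive probability vectors on finite alphabets) are measurably isomorphic — i.e., there exists a homomorphism from BS(p) to BS(q), invertible after discarding sets of measure zero, whose inverse is also a homomorphism — then H(p) = H(q). -/
open MeasureTheory ENNReal Filter

noncomputable section

/-- A measurable isomorphism of shift systems: a pair of mutually inverse factor maps
(after discarding sets of measure zero). -/
def IsMeasurableIsomorphism {A B : Type*} [MeasurableSpace A] [MeasurableSpace B]
    (μ : Measure (ℤ → A)) (ν : Measure (ℤ → B))
    (D : Set (ℤ → A)) (E : Set (ℤ → B))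
    (φ : (ℤ → A) → (ℤ → B)) (ψ : (ℤ → B) → (ℤ → A)) : Prop :=
  IsFactorMap μ ν D φ ∧ IsFactorMap ν μ E ψ ∧
  (∀ x ∈ D, φ x ∈ E ∧ ψ (φ x) = x) ∧ (∀ y ∈ E, ψ y ∈ D ∧ φ (ψ y) = y)

section FiniteGibbs

variable {Ω α β : Type*} [MeasurableSpace Ω] {μ : Measure Ω}
  [Fintype α] [MeasurableSpace α] [DiscreteMeasurableSpace α]
  [Fintype β] [MeasurableSpace β] [DiscreteMeasurableSpace β]

/-- A real function of a random variable with finitely many values is integrable. -/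
lemma integrable_comp_of_finite [IsFiniteMeasure μ] {X : Ω → α} (hX : Measurable X)
    (g : α → ℝ) : Integrable (fun ω => g (X ω)) μ :=
  (Integrable.of_finite (μ := μ.map X) (f := g)).comp_measurable hX

lemma integral_comp_eq_sum [IsFiniteMeasure μ] {X : Ω → α} (hX : Measurable X) (g : α → ℝ) :
    ∫ ω, g (X ω) ∂μ = ∑ a, μ.real (X ⁻¹' {a}) * g a := by
  rw [← integral_map (f := g) hX.aemeasurable (by fun_prop),
    integral_fintype Integrable.of_finite]
  simp [map_measureReal_apply hX (measurableSet_singleton _)]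

/-- A form of Gibbs' inequality: if `R` is a subprobability weight on `β × α`, then the expected
log-weight of the pair `(Y, X)` is at most the expected log-probability of `Y`. -/
lemma integral_log_weight_le [IsProbabilityMeasure μ] {Y : Ω → β} {X : Ω → α}
    (hY : Measurable Y) (hX : Measurable X) {q : β → ℝ} (hq : ∀ b, 0 < q b)
    (hYq : ∀ b, μ.real (Y ⁻¹' {b}) ≤ q b) {R : β → α → ℝ} (hR : ∀ b a, 0 < R b a)
    (hR1 : ∑ a, ∑ b, R b a ≤ 1) :
    ∫ ω, Real.log (R (Y ω) (X ω)) ∂μ ≤ ∫ ω, Real.log (q (Y ω)) ∂μ := by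
  have hYX : Measurable fun ω => (Y ω, X ω) := hY.prodMk hX
  have hint (g : β × α → ℝ) : Integrable (fun ω => g (Y ω, X ω)) μ :=
    integrable_comp_of_finite hYX g
  have hratio : ∫ ω, R (Y ω) (X ω) / q (Y ω) ∂μ ≤ 1 := by
    refine le_trans ?_ hR1
    rw [integral_comp_eq_sum hYX (fun z => R z.1 z.2 / q z.1), Fintype.sum_prod_type,
      Finset.sum_comm]
    refine Finset.sum_le_sum fun a _ => Finset.sum_le_sum fun b _ => ?_
    have hle : μ.real ((fun ω => (Y ω, X ω)) ⁻¹' {(b, a)}) ≤ q b :=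
      (measureReal_mono fun ω hω => by
        simp only [Set.mem_preimage, Set.mem_singleton_iff, Prod.mk.injEq] at hω ⊢
        exact hω.1).trans (hYq b)
    calc μ.real ((fun ω => (Y ω, X ω)) ⁻¹' {(b, a)}) * (R b a / q b)
        ≤ q b * (R b a / q b) :=
          mul_le_mul_of_nonneg_right hle (div_nonneg (hR b a).le (hq b).le)
      _ = R b a := mul_div_cancel₀ _ (hq b).ne'
  have hlog : ∫ ω, (Real.log (R (Y ω) (X ω)) - Real.log (q (Y ω))) ∂μ
      ≤ ∫ ω, (R (Y ω) (X ω) / q (Y ω) - 1) ∂μ := by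
    refine integral_mono (hint fun z => Real.log (R z.1 z.2) - Real.log (q z.1))
      (hint fun z => R z.1 z.2 / q z.1 - 1) fun ω => ?_
    simp only
    rw [← Real.log_div (hR _ _).ne' (hq _).ne']
    exact Real.log_le_sub_one_of_pos (div_pos (hR _ _) (hq _))
  rw [integral_sub (hint fun z => Real.log (R z.1 z.2)) (hint fun z => Real.log (q z.1)),
    integral_sub (hint fun z => R z.1 z.2 / q z.1) (integrable_const 1)] at hlog
  simp only [integral_const, probReal_univ, smul_eq_mul, mul_one] at hlog
  linarith

end FiniteGibbs

lemma measurable_shift {A : Type*} [MeasurableSpace A] : Measurable (shift (A := A)) :=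
  measurable_pi_lambda _ fun _ => measurable_pi_apply _

lemma shift_iterate_apply {A : Type*} (n : ℕ) (x : ℤ → A) (j : ℤ) :
    shift^[n] x j = x (j + n) := by
  induction n generalizing x with
  | zero => simp
  | succ k ih =>
    rw [Function.iterate_succ_apply, ih, shift]
    congr 1
    push_cast
    ring

namespace IsProbVector

variable {A : Type*} [Fintype A] {p : A → ℝ}

lemma nonempty (hp : IsProbVector p) : Nonempty A := by
  by_contra h
  rw [not_nonempty_iff] at h
  simpa using hp.2

end IsProbVector

namespace IsBernoulliMeasure

variable {A : Type*} [Fintype A] [MeasurableSpace A] {p : A → ℝ} {μ ν : Measure (ℤ → A)}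

lemma isProbabilityMeasure (hp : IsProbVector p) (hμ : IsBernoulliMeasure μ p) :
    IsProbabilityMeasure μ := by
  obtain ⟨a⟩ := hp.nonempty
  exact ⟨by simpa using hμ ∅ fun _ => a⟩

lemma real_preimage_pi {ι : Type*} [Fintype ι] (hp : IsProbVector p)
    (hμ : IsBernoulliMeasure μ p) (e : ι ↪ ℤ) (w : ι → A) :
    μ.real ((fun x i => x (e i)) ⁻¹' {w}) = ∏ i, p (w i) := by
  obtain ⟨a⟩ := hp.nonempty
  have hset : (fun (x : ℤ → A) i => x (e i)) ⁻¹' {w} =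
      {x : ℤ → A | ∀ j ∈ Finset.univ.map e, x j = Function.extend e w (fun _ => a) j} := by
    ext x
    simp [funext_iff, e.injective.extend_apply]
  rw [Measure.real, hset, hμ, Finset.prod_map, ENNReal.toReal_ofReal]
  · simp [e.injective.extend_apply]
  · exact Finset.prod_nonneg fun _ _ => (hp.1 _).le

lemma real_preimage_eval (hp : IsProbVector p) (hμ : IsBernoulliMeasure μ p) (i : ℤ) (a : A) :
    μ.real ((fun x => x i) ⁻¹' {a}) = p a := by
  have h := hμ {i} fun _ => a
  simp only [Finset.mem_singleton, forall_eq, Finset.prod_singleton] at h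
  rw [Measure.real, show (fun x : ℤ → A => x i) ⁻¹' {a} = {x | x i = a} from rfl, h,
    ENNReal.toReal_ofReal (hp.1 a).le]

variable [DiscreteMeasurableSpace A]

lemma eq (hp : IsProbVector p) (hμ : IsBernoulliMeasure μ p) (hν : IsBernoulliMeasure ν p) :
    μ = ν := by
  have := hμ.isProbabilityMeasure hp
  obtain ⟨a⟩ := hp.nonempty
  have hlim : IsProjectiveLimit ν fun F : Finset ℤ => μ.map F.restrict := fun F => by
    refine Measure.ext_of_singleton fun w => ?_
    have hset : (F.restrict : (ℤ → A) → F → A) ⁻¹' {w} =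
        {x : ℤ → A | ∀ i ∈ F, x i = if h : i ∈ F then w ⟨i, h⟩ else a} := by
      ext x
      simp only [Set.mem_preimage, Set.mem_singleton_iff, funext_iff, Subtype.forall,
        Set.mem_ofPred_eq, Finset.restrict]
      exact forall₂_congr fun i hi => by simp [hi]
    rw [Measure.map_apply (by fun_prop) (measurableSet_singleton _),
      Measure.map_apply (by fun_prop) (measurableSet_singleton _), hset, hμ, hν]
  exact IsProjectiveLimit.unique (fun _ => rfl) hlim

lemma map_shift (hμ : IsBernoulliMeasure μ p) : IsBernoulliMeasure (μ.map shift) p := by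
  intro F s
  have hset : shift ⁻¹' {x : ℤ → A | ∀ i ∈ F, x i = s i} =
      {x : ℤ → A | ∀ i ∈ F.map (addRightEmbedding (1 : ℤ)), x i = s (i - 1)} := by
    ext x
    simp [shift]
  have hmeas : MeasurableSet {x : ℤ → A | ∀ i ∈ F, x i = s i} := by
    simp only [Set.ofPred_forall]
    exact Finset.measurableSet_biInter _ fun i _ =>
      measurable_pi_apply i (measurableSet_singleton _)
  rw [Measure.map_apply measurable_shift hmeas, hset, hμ]
  simp

lemma measurePreserving_shift (hp : IsProbVector p) (hμ : IsBernoulliMeasure μ p) :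
    MeasurePreserving shift μ μ :=
  ⟨measurable_shift, hμ.map_shift.eq hp hμ⟩

lemma integral_log_eval (hp : IsProbVector p) (hμ : IsBernoulliMeasure μ p) (i : ℤ) :
    ∫ x, Real.log (p (x i)) ∂μ = -vecEntropy p := by
  have := hμ.isProbabilityMeasure hp
  rw [integral_comp_eq_sum (X := fun x : ℤ → A => x i) (measurable_pi_apply i)
    fun a => Real.log (p a)]
  simp [vecEntropy, hμ.real_preimage_eval hp]

end IsBernoulliMeasure

/-- A finite-valued measurable function on the sequence space is approximated in measure by
functions of finitely many coordinates. -/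
lemma exists_finite_window_approx {A B : Type*} [MeasurableSpace A]
    [Fintype B] [Nonempty B] [MeasurableSpace B] [DiscreteMeasurableSpace B]
    {μ : Measure (ℤ → A)} [IsFiniteMeasure μ] {Y : (ℤ → A) → B} (hY : Measurable Y)
    {ε : ℝ} (hε : 0 < ε) :
    ∃ (m : ℕ) (f : (ℤ → A) → B), Measurable f ∧
      (∀ x y, (∀ i : ℤ, -(m : ℤ) ≤ i → i ≤ m → x i = y i) → f x = f y) ∧
      μ.real {x | Y x ≠ f x} ≤ ε := by
  classical
  have hring : IsSetRing (measurableCylinders fun _ : ℤ => A) :=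
    ⟨empty_mem_measurableCylinders _, fun _ _ => union_mem_measurableCylinders,
      fun _ _ => sdiff_mem_measurableCylinders⟩
  have hcard : (0 : ℝ) < Fintype.card B := by exact_mod_cast Fintype.card_pos
  have happ (b : B) : ∃ t ∈ measurableCylinders fun _ : ℤ => A,
      μ (symmDiff t (Y ⁻¹' {b})) < ENNReal.ofReal (ε / Fintype.card B) :=
    exists_measure_symmDiff_lt_of_generateFrom_isSetRing hring
      ⟨{Set.univ}, Set.countable_singleton _,
        Set.singleton_subset_iff.2 (univ_mem_measurableCylinders _), by simp⟩
      generateFrom_measurableCylinders.symm (hY (measurableSet_singleton b))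
      (ENNReal.ofReal_pos.2 (div_pos hε hcard))
  choose C hC hCμ using happ
  have hCmeas (b : B) : MeasurableSet (C b) := MeasurableSet.of_mem_measurableCylinders (hC b)
  simp only [mem_measurableCylinders] at hC
  choose F S _ hCS using hC
  let g : (B → Prop) → B := fun s => if h : ∃ b, s b then h.choose else Classical.arbitrary B
  let m : ℕ := (Finset.univ.biUnion F).sup Int.natAbs
  refine ⟨m, fun x => g fun b => x ∈ C b, ?_, fun x y hxy => ?_, ?_⟩
  · exact (measurable_of_finite g).comp
      (measurable_pi_lambda _ fun b => (hCmeas b).mem)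
  · have hmem (b : B) : x ∈ C b ↔ y ∈ C b := by
      have hres : (F b).restrict x = (F b).restrict y := by
        ext ⟨i, hi⟩
        have him : i.natAbs ≤ m :=
          Finset.le_sup (f := Int.natAbs) (Finset.mem_biUnion.2 ⟨b, Finset.mem_univ b, hi⟩)
        exact hxy i (by omega) (by omega)
      rw [hCS b, mem_cylinder, mem_cylinder, hres]
    simp only [hmem]
  · have hsub : {x | Y x ≠ g fun b => x ∈ C b} ⊆ ⋃ b, symmDiff (C b) (Y ⁻¹' {b}) := by
      intro x hx
      by_contra hnot
      have hiff (b : B) : x ∈ C b ↔ Y x = b := by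
        have hb : x ∉ symmDiff (C b) (Y ⁻¹' {b}) := fun h => hnot (Set.mem_iUnion.2 ⟨b, h⟩)
        simp only [Set.mem_symmDiff, Set.mem_preimage, Set.mem_singleton_iff] at hb
        tauto
      have hex : ∃ b, x ∈ C b := ⟨Y x, (hiff _).2 rfl⟩
      refine hx ?_
      simp only [g, dif_pos hex]
      exact (hiff _).1 hex.choose_spec
    calc μ.real {x | Y x ≠ g fun b => x ∈ C b}
        ≤ μ.real (⋃ b, symmDiff (C b) (Y ⁻¹' {b})) := measureReal_mono hsub
      _ ≤ ∑ b, μ.real (symmDiff (C b) (Y ⁻¹' {b})) := measureReal_iUnion_fintype_le _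
      _ ≤ ∑ _b : B, ε / Fintype.card B := Finset.sum_le_sum fun b _ =>
          ENNReal.toReal_le_of_le_ofReal (div_pos hε hcard).le (hCμ b).le
      _ = ε := by
        rw [Finset.sum_const, Finset.card_univ, nsmul_eq_mul, mul_div_cancel₀ _ hcard.ne']

lemma nonpos_of_forall_nat_mul_le {a b : ℝ} (h : ∀ n : ℕ, n * a ≤ b) : a ≤ 0 := by
  by_contra! ha
  obtain ⟨n, hn⟩ := exists_nat_gt (b / a)
  rw [div_lt_iff₀ ha] at hn
  exact absurd (h n) (not_le.2 hn)

lemma IsFactorMap.apply_natCast {A B : Type*} [MeasurableSpace A] [MeasurableSpace B]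
    {μ : Measure (ℤ → A)} {ν : Measure (ℤ → B)} {D : Set (ℤ → A)} {φ : (ℤ → A) → (ℤ → B)}
    (hφ : IsFactorMap μ ν D φ) {x : ℤ → A} (hx : x ∈ D)
    (n : ℕ) : φ x n = φ (shift^[n] x) 0 := by
  have key : shift^[n] x ∈ D ∧ φ (shift^[n] x) = shift^[n] (φ x) := by
    induction n with
    | zero => exact ⟨hx, rfl⟩
    | succ k ih =>
      rw [Function.iterate_succ_apply', Function.iterate_succ_apply', ← ih.2]
      exact ⟨by rw [← Set.mem_preimage, hφ.dom_shift_invariant]; exact ih.1,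
        hφ.equivariant _ ih.1⟩
  rw [key.2, shift_iterate_apply, zero_add]

section FactorMap

variable {A B : Type*} [Fintype A] [Fintype B]
  [MeasurableSpace A] [DiscreteMeasurableSpace A] [MeasurableSpace B] [DiscreteMeasurableSpace B]
  {p : A → ℝ} {q : B → ℝ} {μ : Measure (ℤ → A)} {ν : Measure (ℤ → B)}
  {D : Set (ℤ → A)} {φ : (ℤ → A) → (ℤ → B)}

/-- If a channel `W` reproduces the zero coordinate of the factor from a function `f` of a finite
window, then the entropy of the factor exceeds that of the source by at most the expected
log-loss of the channel. -/
lemma IsFactorMap.vecEntropy_le_sub_integral_log (hp : IsProbVector p) (hq : IsProbVector q)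
    (hμ : IsBernoulliMeasure μ p) (hν : IsBernoulliMeasure ν q) (hφ : IsFactorMap μ ν D φ)
    {W : B → B → ℝ} (hW : ∀ b c, 0 < W b c) (hW1 : ∀ c, ∑ b, W b c ≤ 1)
    {f : (ℤ → A) → B} (hf : Measurable f) {m : ℕ}
    (hfm : ∀ x y, (∀ i : ℤ, -(m : ℤ) ≤ i → i ≤ m → x i = y i) → f x = f y) :
    vecEntropy q ≤ vecEntropy p - ∫ x, Real.log (W (φ x 0) (f x)) ∂μ := by
  classical
  have := hμ.isProbabilityMeasure hp
  obtain ⟨a⟩ := hp.nonempty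
  set c := ∫ x, Real.log (W (φ x 0) (f x)) ∂μ with hc
  have hcoord (i : ℤ) : Measurable fun x => φ x i :=
    (measurable_pi_apply i).comp hφ.measurable_map
  have hD : ∀ᵐ x ∂μ, x ∈ D :=
    (prob_compl_eq_zero_iff hφ.dom_measurable).2 hφ.dom_full
  suffices h : ∀ n : ℕ, n * (vecEntropy q - vecEntropy p + c) ≤ (2 * m + 1) * vecEntropy p by
    linarith [nonpos_of_forall_nat_mul_le h]
  intro n
  let S : Finset ℤ := Finset.Icc (-(m : ℤ)) (n + m)
  let ext : (S → A) → ℤ → A := fun w j => if h : j ∈ S then w ⟨j, h⟩ else a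
  let R : (Fin n → B) → (S → A) → ℝ := fun y w =>
    (∏ i, p (w i)) * ∏ i : Fin n, W (y i) (f (shift^[i] (ext w)))
  let Y : (ℤ → A) → Fin n → B := fun x i => φ x (i : ℕ)
  have hY : Measurable Y := measurable_pi_lambda _ fun i => hcoord _
  have hX : Measurable (S.restrict : (ℤ → A) → S → A) := by fun_prop
  have hYq (y : Fin n → B) : μ.real (Y ⁻¹' {y}) ≤ ∏ i, q (y i) := by
    have h := hν.real_preimage_pi hq
      (⟨fun i : Fin n => ((i : ℕ) : ℤ), fun i j h => Fin.ext (Int.ofNat_inj.1 h)⟩ : Fin n ↪ ℤ) y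
    rw [hφ.pushforward, map_measureReal_apply hφ.measurable_map] at h
    · exact h.le
    · exact measurable_pi_lambda _ (fun i => measurable_pi_apply _) (measurableSet_singleton _)
  have hR (y : Fin n → B) (w : S → A) : 0 < R y w :=
    mul_pos (Finset.prod_pos fun i _ => hp.1 _) (Finset.prod_pos fun i _ => hW _ _)
  have hR1 : ∑ w, ∑ y, R y w ≤ 1 := by
    calc ∑ w, ∑ y, R y w
        = ∑ w : S → A, (∏ i, p (w i)) * ∏ i : Fin n, ∑ b, W b (f (shift^[i] (ext w))) := by
          refine Finset.sum_congr rfl fun w _ => ?_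
          rw [← Finset.mul_sum, Fintype.prod_sum]
      _ ≤ ∑ w : S → A, ∏ i, p (w i) := by
          refine Finset.sum_le_sum fun w _ => mul_le_of_le_one_right
            (Finset.prod_nonneg fun i _ => (hp.1 _).le) ?_
          exact Finset.prod_le_one (fun i _ => Finset.sum_nonneg fun b _ => (hW _ _).le)
            fun i _ => hW1 _
      _ = 1 := by
          rw [← Fintype.prod_sum (fun (_ : S) a => p a)]
          simp [hp.2]
  have hgibbs := integral_log_weight_le (μ := μ) hY hX (q := fun y => ∏ i, q (y i))
    (fun y => Finset.prod_pos fun i _ => hq.1 _) hYq hR hR1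
  have hright : ∫ x, Real.log (∏ i, q (Y x i)) ∂μ = -(n * vecEntropy q) := by
    have hi (i : ℤ) : ∫ x, Real.log (q (φ x i)) ∂μ = -vecEntropy q := by
      rw [← hν.integral_log_eval hq i, hφ.pushforward,
        integral_map (f := fun y => Real.log (q (y i))) hφ.measurable_map.aemeasurable]
      exact (((measurable_of_finite fun b => Real.log (q b)).comp
        (measurable_pi_apply i)).aestronglyMeasurable)
    simp_rw [Real.log_prod (fun i _ => (hq.1 _).ne')]
    rw [integral_finsetSum _ fun i _ =>
      integrable_comp_of_finite (hcoord _) fun b => Real.log (q b)]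
    simp [hi]
  have hloss (i : ℕ) : Measurable fun x => (φ x i, f (shift^[i] x)) :=
    (hcoord _).prodMk (hf.comp (measurable_shift.iterate i))
  have hleft : ∫ x, Real.log (R (Y x) (S.restrict x)) ∂μ
      = -((n + 2 * m + 1) * vecEntropy p) + n * c := by
    have hext (x : ℤ → A) (i : Fin n) :
        f (shift^[i] (ext (S.restrict x))) = f (shift^[i] x) := by
      refine hfm _ _ fun j hj hj' => ?_
      have hmem : j + (i : ℕ) ∈ S := Finset.mem_Icc.2 ⟨by omega, by omega⟩
      rw [shift_iterate_apply, shift_iterate_apply]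
      simp [ext, hmem]
    have hshift (i : ℕ) : ∫ x, Real.log (W (φ x i) (f (shift^[i] x))) ∂μ = c := by
      have hpres := (hμ.measurePreserving_shift hp).iterate i
      have hmeas : Measurable fun x => Real.log (W (φ x 0) (f x)) :=
        (measurable_of_finite fun z : B × B => Real.log (W z.1 z.2)).comp
          ((hcoord 0).prodMk hf)
      rw [hc, ← hpres.map_eq, integral_map hpres.measurable.aemeasurable
        hmeas.aestronglyMeasurable, hpres.map_eq]
      refine integral_congr_ae ?_
      filter_upwards [hD] with x hx
      rw [hφ.apply_natCast hx]
    have hlogR (x : ℤ → A) : Real.log (R (Y x) (S.restrict x))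
        = ∑ i : S, Real.log (p (x i)) +
          ∑ i : Fin n, Real.log (W (φ x (i : ℕ)) (f (shift^[i] x))) := by
      simp only [R, hext]
      rw [Real.log_mul (Finset.prod_pos fun i _ => hp.1 _).ne'
        (Finset.prod_pos fun i _ => hW _ _).ne', Real.log_prod (fun i _ => (hp.1 _).ne'),
        Real.log_prod (fun i _ => (hW _ _).ne')]
      rfl
    have hintp (i : ℤ) : Integrable (fun x : ℤ → A => Real.log (p (x i))) μ :=
      integrable_comp_of_finite (X := fun x : ℤ → A => x i) (measurable_pi_apply i)
        fun b => Real.log (p b)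
    have hintW (i : ℕ) : Integrable (fun x => Real.log (W (φ x i) (f (shift^[i] x)))) μ :=
      integrable_comp_of_finite (hloss i) fun z => Real.log (W z.1 z.2)
    have hS : (S.card : ℝ) = n + 2 * m + 1 := by
      have : S.card = n + 2 * m + 1 := by
        rw [Int.card_Icc]
        omega
      exact_mod_cast this
    simp_rw [hlogR]
    rw [integral_add (integrable_finsetSum _ fun i _ => hintp _)
      (integrable_finsetSum _ fun i _ => hintW _),
      integral_finsetSum _ fun i _ => hintp _, integral_finsetSum _ fun i _ => hintW _]
    simp [hμ.integral_log_eval hp, hshift, hS]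
  rw [hright, hleft] at hgibbs
  linarith

/-- The entropy of a Bernoulli factor of a Bernoulli scheme is at most that of the scheme. -/
theorem IsFactorMap.vecEntropy_le (hp : IsProbVector p) (hq : IsProbVector q)
    (hμ : IsBernoulliMeasure μ p) (hν : IsBernoulliMeasure ν q) (hφ : IsFactorMap μ ν D φ) :
    vecEntropy q ≤ vecEntropy p := by
  classical
  have := hμ.isProbabilityMeasure hp
  have := hq.nonempty
  have hcoord : Measurable fun x => φ x 0 := (measurable_pi_apply 0).comp hφ.measurable_map
  have hcard : (0 : ℝ) < Fintype.card B := by exact_mod_cast Fintype.card_pos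
  have hδ : ∀ δ ∈ Set.Ioo (0 : ℝ) 1, vecEntropy q ≤ vecEntropy p - Real.log (1 - δ) := by
    rintro δ ⟨hδ0, hδ1⟩
    let W : B → B → ℝ := fun b c => if b = c then 1 - δ else δ / Fintype.card B
    have hW (b c : B) : 0 < W b c := by
      simp only [W]
      split_ifs
      · linarith
      · positivity
    have hW1 (c : B) : ∑ b, W b c ≤ 1 := by
      calc ∑ b, W b c ≤ ∑ b, ((if b = c then 1 - δ else 0) + δ / Fintype.card B) := by
            refine Finset.sum_le_sum fun b _ => ?_
            have : 0 < δ / Fintype.card B := by positivity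
            simp only [W]
            split_ifs <;> linarith
        _ = 1 := by
            rw [Finset.sum_add_distrib, Finset.sum_ite_eq' Finset.univ c, Finset.sum_const,
              Finset.card_univ, nsmul_eq_mul, mul_div_cancel₀ _ hcard.ne']
            simp
    set K : ℝ := |Real.log (δ / Fintype.card B) - Real.log (1 - δ)| + 1 with hK
    have hK0 : 0 < K := by positivity
    refine le_of_forall_pos_le_add fun ε hε => ?_
    obtain ⟨m, f, hf, hfm, hfε⟩ :=
      exists_finite_window_approx (μ := μ) hcoord (div_pos hε hK0)
    have hmain := hφ.vecEntropy_le_sub_integral_log hp hq hμ hν hW hW1 hf hfm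
    have hbad : MeasurableSet {x | φ x 0 ≠ f x} := (measurableSet_eq_fun hcoord hf).compl
    have hlower : ∫ x, (Real.log (1 - δ) - {x | φ x 0 ≠ f x}.indicator (fun _ => K) x) ∂μ
        ≤ ∫ x, Real.log (W (φ x 0) (f x)) ∂μ := by
      refine integral_mono ((integrable_const _).sub ((integrable_const K).indicator hbad))
        (integrable_comp_of_finite (hcoord.prodMk hf) fun z => Real.log (W z.1 z.2)) fun x => ?_
      by_cases hx : φ x 0 = f x
      · simp [W, hx]
      · simp only [Set.indicator, Set.mem_ofPred_eq, ne_eq, hx, not_false_eq_true, if_true, W,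
          if_false]
        linarith [neg_abs_le (Real.log (δ / Fintype.card B) - Real.log (1 - δ))]
    rw [integral_sub (integrable_const _) ((integrable_const K).indicator hbad),
      integral_indicator_const K hbad] at hlower
    simp only [integral_const, probReal_univ, smul_eq_mul, one_mul] at hlower
    rw [le_div_iff₀ hK0] at hfε
    linarith
  have hlim : Tendsto (fun δ : ℝ => vecEntropy p - Real.log (1 - δ))
      (nhdsWithin 0 (Set.Ioi 0)) (nhds (vecEntropy p)) := by
    have hcont : ContinuousAt (fun δ : ℝ => vecEntropy p - Real.log (1 - δ)) 0 :=
      continuousAt_const.sub ((continuousAt_const.sub continuousAt_id).log (by simp))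
    simpa using hcont.tendsto.mono_left nhdsWithin_le_nhds
  refine ge_of_tendsto hlim ?_
  filter_upwards [Ioo_mem_nhdsGT (zero_lt_one' ℝ)] with δ h using hδ δ h

end FactorMap

/-- **Kolmogorov–Sinai.** If the Bernoulli schemes `BS(p)` and `BS(q)` are measurably
isomorphic, then `H(p) = H(q)`. -/
theorem entropy_eq_of_measurably_isomorphic
    {A B : Type*} [Fintype A] [Fintype B]
    [MeasurableSpace A] [DiscreteMeasurableSpace A]
    [MeasurableSpace B] [DiscreteMeasurableSpace B]
    (p : A → ℝ) (q : B → ℝ) (hp : IsProbVector p) (hq : IsProbVector q)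
    (μ : Measure (ℤ → A)) (ν : Measure (ℤ → B))
    (hμ : IsBernoulliMeasure μ p) (hν : IsBernoulliMeasure ν q)
    (D : Set (ℤ → A)) (E : Set (ℤ → B))
    (φ : (ℤ → A) → (ℤ → B)) (ψ : (ℤ → B) → (ℤ → A))
    (hiso : IsMeasurableIsomorphism μ ν D E φ ψ) :
    vecEntropy p = vecEntropy q := by
  exact le_antisymm (hiso.2.1.vecEntropy_le hq hp hν hμ) (hiso.1.vecEntropy_le hp hq hμ hν)
end
end
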